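/- arXiv:2007.04031 — 14 statements merged into one kernel-verified Lean document; each statement's English description precedes it below -/
import Mathlib

section
/- If a sequence (a_n)_{n≥1} of integers is completely multiplicative (a_{mn} = a_m · a_n for all m, n ≥ 1 and a_1 = 1) and is a Dold sequence, then a_n = 1 for every n ≥ 1. -/
/-- A sequence `(a n)` of integers (indexed by `n ≥ 1`) is a Dold sequence if for every
`n ≥ 1`, `n` divides `∑_{d ∣ n} μ(n/d) · a d`. -/
def DoldSeq (a : ℕ → ℤ) : Prop :=
  ∀ n : ℕ, 1 ≤ n →
    (n : ℤ) ∣ ∑ d ∈ n.divisors, ArithmeticFunction.moebius (n / d) * a d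

theorem completelyMultiplicative_dold_eq_one (a : ℕ → ℤ)
    (h1 : a 1 = 1)
    (hmul : ∀ m n : ℕ, 1 ≤ m → 1 ≤ n → a (m * n) = a m * a n)
    (hdold : DoldSeq a) :
    ∀ n : ℕ, 1 ≤ n → a n = 1 := by
  have hpow : ∀ p : ℕ, p.Prime → ∀ k : ℕ, a (p ^ k) = a p ^ k := by
    intro p hp k
    induction k with
    | zero => simpa using h1
    | succ k ih =>
      rw [pow_succ, hmul _ _ (Nat.pos_of_ne_zero (pow_ne_zero _ hp.ne_zero)) hp.one_le, ih, pow_succ]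
  have key : ∀ p : ℕ, p.Prime → ∀ k : ℕ, (p : ℤ) ^ (k + 1) ∣ a p ^ k * (a p - 1) := by
    intro p hp k
    have h := hdold (p ^ (k + 1)) (Nat.pos_of_ne_zero (pow_ne_zero _ hp.ne_zero))
    rw [Nat.sum_divisors_prime_pow hp, Finset.sum_range_succ, Finset.sum_range_succ,
      Finset.sum_eq_zero, Nat.div_self (Nat.pos_of_ne_zero (pow_ne_zero _ hp.ne_zero)),
      Nat.pow_div (Nat.le_succ k) hp.pos, hpow p hp, hpow p hp] at h
    · have e : k.succ - k = 1 := by omega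
      simp only [Nat.succ_eq_add_one] at e
      rw [e, pow_one, ArithmeticFunction.moebius_apply_prime hp,
        ArithmeticFunction.moebius_apply_one] at h
      push_cast at h
      convert h using 1
      ring
    · intro i hi
      have hi := Finset.mem_range.1 hi
      rw [Nat.pow_div (by omega) hp.pos,
        ArithmeticFunction.moebius_apply_prime_pow hp (by omega), if_neg (by omega), zero_mul]
  have hprime : ∀ p : ℕ, p.Prime → a p = 1 := by
    intro p hp
    have h0 : (p : ℤ) ∣ a p - 1 := by simpa using key p hp 0
    have hc : IsCoprime (p : ℤ) (a p) := by
      obtain ⟨c, hc⟩ := h0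
      exact ⟨-c, 1, by linarith⟩
    by_contra hne
    have hne' : a p - 1 ≠ 0 := sub_ne_zero.2 hne
    have hd : (p : ℤ) ^ ((a p - 1).natAbs + 1) ∣ a p - 1 :=
      (hc.pow (m := (a p - 1).natAbs + 1) (n := (a p - 1).natAbs)).dvd_of_dvd_mul_left (key p hp _)
    have hd2 := Int.natAbs_dvd_natAbs.2 hd
    have hle := Nat.le_of_dvd (Int.natAbs_pos.2 hne') hd2
    rw [Int.natAbs_pow, Int.natAbs_natCast] at hle
    have := Nat.lt_pow_self (n := (a p - 1).natAbs + 1) hp.one_lt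
    omega
  intro n
  induction n using induction_on_primes with
  | zero => intro h; omega
  | one => intro _; exact h1
  | prime_mul p m hp ih =>
    intro h
    have hm : 1 ≤ m := by
      rcases Nat.eq_zero_or_pos m with rfl | hm
      · simp at h
      · exact hm
    rw [hmul p m hp.one_le hm, hprime p hp, ih hm, one_mul]
end

section
/- Let h be a polynomial with rational coefficients taking integer values on the positive integers. If the sequence (h(n))_{n≥1} is a Dold sequence, then h is a constant polynomial. -/
theorem divisors_pq (p q : ℕ) (hp : p.Prime) (hq : q.Prime) :
    (p * q).divisors = {1, p, q, p * q} := by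
  ext d
  rw [Nat.mem_divisors, Nat.dvd_mul]
  simp only [Nat.dvd_prime hp, Nat.dvd_prime hq, Finset.mem_insert, Finset.mem_singleton]
  constructor
  · rintro ⟨⟨x, y, hx | hx, hy | hy, rfl⟩, -⟩ <;> subst hx <;> subst hy <;> simp
  · intro h
    refine ⟨?_, mul_ne_zero hp.ne_zero hq.ne_zero⟩
    rcases h with h | h | h | h
    · exact ⟨1, 1, by simp, by simp, by simp [h]⟩
    · exact ⟨p, 1, by simp, by simp, by simp [h]⟩
    · exact ⟨1, q, by simp, by simp, by simp [h]⟩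
    · exact ⟨p, q, by simp, by simp, by simp [h]⟩

theorem dold_pq (a : ℕ → ℤ) (hd : DoldSeq a) (p q : ℕ) (hp : p.Prime) (hq : q.Prime)
    (hpq : p ≠ q) : (p : ℤ) ∣ a (p * q) - a q := by
  have h1 := hd p hp.one_le
  rw [hp.sum_divisors] at h1
  have h2 := hd (p * q) (Nat.mul_pos hp.pos hq.pos)
  have hp1 := hp.one_lt
  have hq1 := hq.one_lt
  have n1 : p ≠ p * q := by nlinarith
  have n2 : q ≠ p * q := by nlinarith
  have n3 : 1 ≠ p * q := by nlinarith
  rw [divisors_pq p q hp hq, Finset.sum_insert (by simp [hp1.ne, hq1.ne]; omega),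
    Finset.sum_insert (by simp [hpq]; omega), Finset.sum_insert (by simp; omega),
    Finset.sum_singleton, Nat.mul_div_cancel_left _ hp.pos, Nat.mul_div_cancel _ hq.pos,
    Nat.div_self (Nat.mul_pos hp.pos hq.pos), Nat.div_one,
    ArithmeticFunction.isMultiplicative_moebius.map_mul_of_coprime
      ((Nat.coprime_primes hp hq).2 hpq),
    ArithmeticFunction.moebius_apply_prime hp, ArithmeticFunction.moebius_apply_prime hq] at h2
  simp only [Nat.div_self hp.pos, Nat.div_one, ArithmeticFunction.moebius_apply_prime hp,
    ArithmeticFunction.moebius_apply_one] at h1 h2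
  have h3 : (p : ℤ) ∣ _ := (Dvd.intro (q : ℤ) (by push_cast; rfl)).trans h2
  have := dvd_add h1 h3
  ring_nf at this ⊢
  exact this

theorem polynomial_dold_is_constant (h : Polynomial ℚ) (a : ℕ → ℤ)
    (hval : ∀ n : ℕ, 1 ≤ n → (a n : ℚ) = h.eval (n : ℚ))
    (hdold : DoldSeq a) :
    ∃ q : ℚ, h = Polynomial.C q := by
  obtain ⟨D, hD, hH⟩ := IsLocalization.integerNormalization_spec
    (nonZeroDivisors ℤ) h
  set H := IsLocalization.integerNormalization (nonZeroDivisors ℤ) h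
  have hD0 : D ≠ 0 := nonZeroDivisors.ne_zero hD
  have key : ∀ n : ℕ, 1 ≤ n → H.eval (n : ℤ) = D * a n := by
    intro n hn
    have := congrArg (Polynomial.eval (n : ℚ)) hH
    have e : ((H.eval (n : ℤ) : ℤ) : ℚ) = (H.map (algebraMap ℤ ℚ)).eval (n : ℚ) := by
      have := Polynomial.eval_map_apply (f := algebraMap ℤ ℚ) (p := H) (n : ℤ)
      simpa using this.symm
    have : ((H.eval (n : ℤ) : ℤ) : ℚ) = D * a n := by
      rw [e, this, hval n hn]
      simp
    exact_mod_cast this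
  have main : ∀ q : ℕ, q.Prime → D * a q = H.eval 0 := by
    intro q hq
    by_contra hne
    obtain ⟨p, hpl, hp⟩ := Nat.exists_infinite_primes
      ((D * a q - H.eval 0).natAbs + q + 1)
    have h1 := (dold_pq a hdold p q hp hq (by omega)).mul_left D
    have h2 := Polynomial.sub_dvd_eval_sub (((p * q : ℕ)) : ℤ) 0 H
    rw [key _ (Nat.mul_pos hp.pos hq.pos), sub_zero] at h2
    have h3 : (p : ℤ) ∣ D * a (p * q) - H.eval 0 :=
      (Dvd.intro (q : ℤ) (by push_cast; rfl)).trans h2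
    have h4 := dvd_sub h3 h1
    have h5 : (p : ℤ) ∣ D * a q - H.eval 0 := by
      ring_nf at h4 ⊢
      exact h4
    have h6 := Int.natAbs_dvd_natAbs.2 h5
    have := Nat.le_of_dvd (Int.natAbs_pos.2 (sub_ne_zero.2 hne)) h6
    simp at this
    omega
  refine ⟨(H.eval 0 : ℤ) / (D : ℚ), Polynomial.eq_of_infinite_eval_eq _ _ ?_⟩
  refine (Nat.infinite_setOfPred_prime.image (f := fun n : ℕ => (n : ℚ))
    Nat.cast_injective.injOn).mono ?_
  rintro _ ⟨q, hq, rfl⟩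
  have hq : q.Prime := hq
  simp only [Set.mem_ofPred_eq, Polynomial.eval_C]
  rw [← hval q hq.one_le, ← main q hq]
  have : (D : ℚ) ≠ 0 := by exact_mod_cast hD0
  push_cast
  field_simp
end

section
/- Let (a_n)_{n≥1} be a sequence of rational numbers and let (c_n)_{n≥1} be its generating sequence. Then in the ring of formal power series ℚ[[z]] one has the identity exp(∑_{n≥1} (a_n/n)·z^n) · (1 − ∑_{n≥1} c_n·z^n) = 1; equivalently, exp(∑_{n≥1} (a_n/n)·z^n) = (1 − ∑_{n≥1} c_n·z^n)^{−1}. -/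
open PowerSeries

/-- The exponential `exp f = ∑_{k ≥ 0} f^k / k!` of a formal power series `f` (with zero
constant coefficient), given by its coefficients: since `coeff n (f ^ k) = 0` for `k > n`
when `f` has zero constant term, `coeff n (exp f) = ∑_{k = 0}^{n} coeff n (f ^ k) / k!`. -/
noncomputable def expPS (f : PowerSeries ℚ) : PowerSeries ℚ :=
  PowerSeries.mk fun n =>
    ∑ k ∈ Finset.range (n + 1), PowerSeries.coeff n (f ^ k) / (Nat.factorial k : ℚ)

theorem expPS_eq_subst (f : PowerSeries ℚ) (hf : PowerSeries.constantCoeff f = 0) :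
    expPS f = (PowerSeries.exp ℚ).subst f := by
  ext n
  rw [PowerSeries.coeff_subst' (PowerSeries.HasSubst.of_constantCoeff_zero' hf), expPS,
    PowerSeries.coeff_mk]
  symm
  rw [finsum_eq_sum_of_support_subset (s := Finset.range (n + 1))]
  · refine Finset.sum_congr rfl fun k _ => ?_
    simp [div_eq_inv_mul]
  · intro k hk
    simp only [Finset.coe_range, Set.mem_Iio]
    by_contra h
    apply hk
    have hz : PowerSeries.coeff n (f ^ k) = 0 := by
      apply PowerSeries.coeff_of_lt_order
      refine lt_of_lt_of_le ?_ (PowerSeries.le_order_pow_of_constantCoeff_eq_zero k hf)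
      exact_mod_cast (by omega : n < k)
    simp [hz]

/-- If `(c n)` is the generating sequence of the sequence of rationals `(a n)`, i.e.
`n·c n = a n − c 1·a (n−1) − ⋯ − c (n−1)·a 1` for all `n ≥ 1`, then in `ℚ⟦z⟧` we have
`exp (∑_{n ≥ 1} (a n / n) z^n) · (1 − ∑_{n ≥ 1} c n · z^n) = 1`. -/
theorem exp_mul_one_sub_generating_eq_one (a c : ℕ → ℚ)
    (hc : ∀ n : ℕ, 1 ≤ n → (n : ℚ) * c n = a n - ∑ i ∈ Finset.Ico 1 n, c i * a (n - i)) :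
    expPS (PowerSeries.mk fun n => if n = 0 then 0 else a n / (n : ℚ)) *
      (1 - PowerSeries.mk fun n => if n = 0 then 0 else c n) = 1 := by
  set f : PowerSeries ℚ := PowerSeries.mk fun n => if n = 0 then 0 else a n / (n : ℚ) with hfd
  set C : PowerSeries ℚ := PowerSeries.mk fun n => if n = 0 then 0 else c n with hCd
  have hf : PowerSeries.constantCoeff f = 0 := by
    rw [← PowerSeries.coeff_zero_eq_constantCoeff_apply, hfd, PowerSeries.coeff_mk]; simp
  have hC : PowerSeries.constantCoeff C = 0 := by
    rw [← PowerSeries.coeff_zero_eq_constantCoeff_apply, hCd, PowerSeries.coeff_mk]; simp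
  have hE0 : PowerSeries.constantCoeff (expPS f) = 1 := by
    rw [← PowerSeries.coeff_zero_eq_constantCoeff_apply, expPS, PowerSeries.coeff_mk]; simp
  have hE : PowerSeries.derivative ℚ (expPS f) = expPS f * PowerSeries.derivative ℚ f := by
    rw [expPS_eq_subst f hf,
      PowerSeries.derivative_subst (PowerSeries.HasSubst.of_constantCoeff_zero' hf),
      PowerSeries.derivative_exp]
  have hf' : PowerSeries.derivative ℚ f = PowerSeries.mk fun n => a (n + 1) := by
    ext n
    rw [PowerSeries.coeff_derivative, hfd, PowerSeries.coeff_mk, PowerSeries.coeff_mk]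
    have : (n : ℚ) + 1 ≠ 0 := by positivity
    simp
    field_simp
  have key : PowerSeries.derivative ℚ C = PowerSeries.derivative ℚ f * (1 - C) := by
    rw [hf']
    ext n
    rw [mul_sub, mul_one, map_sub, PowerSeries.coeff_derivative, mul_comm _ C,
      PowerSeries.coeff_mul, Finset.Nat.sum_antidiagonal_eq_sum_range_succ_mk,
      Finset.sum_range_succ', PowerSeries.coeff_mk]
    have h := hc (n + 1) (by omega)
    rw [Finset.sum_Ico_eq_sum_range] at h
    simp only [hCd, PowerSeries.coeff_mk]
    push_cast at h
    simp only [Nat.add_sub_cancel, if_true, zero_mul, add_zero, Nat.succ_ne_zero, if_false]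
    rw [mul_comm, h]
    congr 1
    refine Finset.sum_congr rfl fun k hk => ?_
    have := Finset.mem_range.1 hk
    rw [add_comm 1 k, show n + 1 - (k + 1) = n - (k + 1) + 1 by omega]
  apply PowerSeries.derivative.ext
  · rw [Derivation.leibniz, hE, map_sub, key]
    simp only [smul_eq_mul, Derivation.map_one_eq_zero]
    ring
  · simp [hE0, hC]
end

section
/- Let (a_n)_{n≥1} be a sequence of integers and let (c_n)_{n≥1} be its generating sequence. Then (a_n) is a Dold sequence if and only if c_n is an integer for every n ≥ 1. -/
open PowerSeries in
/-- Logarithmic derivatives of unit integer power series. -/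
def logDerivs : AddSubgroup (PowerSeries ℤ) where
  carrier := {A | ∃ Q R : PowerSeries ℤ, Q * R = 1 ∧ coeff 0 Q = 1 ∧
    Q * A = - (X * derivative ℤ Q)}
  zero_mem' := ⟨1, 1, by simp, by simp, by simp⟩
  add_mem' := by
    rintro A B ⟨Q, R, h1, h2, h3⟩ ⟨S, T, g1, g2, g3⟩
    refine ⟨Q * S, R * T, ?_, ?_, ?_⟩
    · linear_combination (S * T) * h1 + g1
    · simp only [coeff_zero_eq_constantCoeff, map_mul] at *
      rw [h2, g2]; rfl
    · rw [Derivation.leibniz]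
      simp only [smul_eq_mul]
      linear_combination S * h3 + Q * g3
  neg_mem' := by
    rintro A ⟨Q, R, h1, h2, h3⟩
    have hd : Q * derivative ℤ R + R * derivative ℤ Q = 0 := by
      have := Derivation.leibniz (derivative ℤ) Q R
      rw [h1, Derivation.map_one_eq_zero] at this
      simpa only [smul_eq_mul] using this.symm
    refine ⟨R, Q, by rw [mul_comm]; exact h1, ?_, ?_⟩
    · have := congrArg (coeff 0) h1
      simp only [coeff_zero_eq_constantCoeff, map_mul] at *
      rw [h2] at this
      simpa using this
    · linear_combination (R * A - X * derivative ℤ R) * h1 - R * R * h3 + X * R * hd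

open PowerSeries in
theorem gen_mem (d : ℕ) (hd : 1 ≤ d) :
    (mk fun k => if d ∣ k ∧ k ≠ 0 then (d : ℤ) else 0) ∈ logDerivs := by
  refine ⟨1 - X ^ d, mk fun k => if d ∣ k then 1 else 0, ?_, ?_, ?_⟩
  · ext k
    rw [sub_mul, one_mul, map_sub, coeff_X_pow_mul', coeff_mk, coeff_one]
    by_cases h : d ≤ k
    · have hk : k ≠ 0 := by omega
      have : d ∣ k - d ↔ d ∣ k := by
        constructor
        · intro h'; have := (Nat.dvd_add_self_right (m := d) (n := k - d)).2 h'
          rwa [Nat.sub_add_cancel h] at this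
        · intro h'; exact Nat.dvd_sub h' dvd_rfl
      simp [h, hk, coeff_mk, this]
    · by_cases hk : k = 0
      · subst hk; simp [h]
      · have : ¬ d ∣ k := fun h' => h (Nat.le_of_dvd (by omega) h')
        simp [h, hk, this]
  · simp [coeff_X_pow, coeff_one]; omega
  · ext k
    rw [sub_mul, one_mul, map_sub, coeff_X_pow_mul', coeff_mk, map_neg]
    rcases k with _ | k
    · simp
    · rw [coeff_succ_X_mul, coeff_derivative, map_sub, coeff_one, coeff_X_pow]
      by_cases h : d ≤ k + 1
      · have : d ∣ k + 1 - d ↔ d ∣ k + 1 := by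
          constructor
          · intro h'; have := (Nat.dvd_add_self_right (m := d) (n := k + 1 - d)).2 h'
            rwa [Nat.sub_add_cancel h] at this
          · intro h'; exact Nat.dvd_sub h' dvd_rfl
        rw [if_pos h, coeff_mk]; simp only [this]
        by_cases he : k + 1 = d
        · subst he; simp
        · have : k + 1 - d ≠ 0 := by omega
          simp [he, this]
      · have h1 : ¬ d ∣ k + 1 := fun h' => h (Nat.le_of_dvd (by omega) h')
        have h2 : k + 1 ≠ d := by omega
        simp [h, h1, h2]

open PowerSeries in
theorem exists_gen (A : PowerSeries ℤ) (hA : A ∈ logDerivs) (h0 : coeff 0 A = 0) :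
    ∃ c : ℕ → ℤ, ∀ n : ℕ, 1 ≤ n →
      (n : ℤ) * c n = coeff n A - ∑ i ∈ Finset.Ico 1 n, c i * coeff (n - i) A := by
  obtain ⟨Q, R, h1, h2, h3⟩ := hA
  refine ⟨fun i => - coeff i Q, fun n hn => ?_⟩
  have := congrArg (coeff n) h3
  obtain ⟨k, rfl⟩ : ∃ k, n = k + 1 := ⟨n - 1, by omega⟩
  rw [map_neg, coeff_succ_X_mul, coeff_derivative, coeff_mul,
    Finset.Nat.sum_antidiagonal_eq_sum_range_succ_mk, Finset.sum_range_succ,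
    Finset.range_eq_Ico, Finset.sum_eq_sum_Ico_succ_bot (by omega)] at this
  simp only [Nat.sub_self, h0, h2, Nat.sub_zero, zero_add] at this
  simp only [neg_mul, Finset.sum_neg_distrib]
  push_cast
  linarith

theorem dold_step (a : ℕ → ℤ) (c : ℕ → ℚ)
    (hc : ∀ n : ℕ, 1 ≤ n →
      (n : ℚ) * c n = (a n : ℚ) - ∑ i ∈ Finset.Ico 1 n, c i * (a (n - i) : ℚ))
    (f : ℕ → ℤ) (hf : ∀ n : ℕ, 0 < n → ∑ d ∈ n.divisors, f d = a n)
    (n : ℕ) (hn : 1 ≤ n) (hd : ∀ m, 1 ≤ m → m < n → (m : ℤ) ∣ f m) :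
    (n : ℤ) ∣ f n ↔ ∃ k : ℤ, c n = k := by
  have hb : ∃ b : ℕ → ℤ, ∀ m, 1 ≤ m → m < n → f m = m * b m :=
    ⟨fun m => f m / m, fun m h1 h2 => (Int.mul_ediv_cancel' (hd m h1 h2)).symm⟩
  obtain ⟨b, hb⟩ := hb
  set A : PowerSeries ℤ := ∑ d ∈ Finset.Ico 1 n,
    b d • (PowerSeries.mk fun k => if d ∣ k ∧ k ≠ 0 then (d : ℤ) else 0) with hAdef
  have hA : A ∈ logDerivs := sum_mem fun d h =>
    zsmul_mem (gen_mem d (Finset.mem_Ico.1 h).1) _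
  have hcoef : ∀ m, 1 ≤ m → PowerSeries.coeff m A =
      ∑ d ∈ (Finset.Ico 1 n).filter (· ∣ m), f d := by
    intro m hm
    rw [hAdef, map_sum, Finset.sum_filter]
    refine Finset.sum_congr rfl fun d h => ?_
    obtain ⟨h1, h2⟩ := Finset.mem_Ico.1 h
    have : m ≠ 0 := by omega
    by_cases hdm : d ∣ m
    · rw [if_pos hdm, map_zsmul, PowerSeries.coeff_mk, if_pos ⟨hdm, this⟩, hb d h1 h2, smul_eq_mul, mul_comm]
    · rw [if_neg hdm, map_zsmul, PowerSeries.coeff_mk, if_neg (fun h => hdm h.1), smul_zero]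
  have h0 : PowerSeries.coeff 0 A = 0 := by
    rw [hAdef, map_sum]
    exact Finset.sum_eq_zero fun d _ => by
      rw [map_zsmul, PowerSeries.coeff_mk, if_neg (fun h => h.2 rfl), smul_zero]
  have hlt : ∀ m, 1 ≤ m → m < n → PowerSeries.coeff m A = a m := by
    intro m h1 h2
    rw [hcoef m h1, ← hf m h1]
    congr 1
    ext d
    simp only [Finset.mem_filter, Finset.mem_Ico, Nat.mem_divisors]
    constructor
    · rintro ⟨_, h⟩; exact ⟨h, by omega⟩
    · rintro ⟨h, _⟩
      have := Nat.le_of_dvd h1 h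
      have := Nat.pos_of_dvd_of_pos h h1
      exact ⟨by omega, h⟩
  have heq : PowerSeries.coeff n A + f n = a n := by
    rw [hcoef n hn, ← hf n hn, ← Nat.cons_self_properDivisors (by omega), Finset.sum_cons, add_comm]
    congr 2
  obtain ⟨e, he⟩ := exists_gen A hA h0
  have he' : ∀ m : ℕ, 1 ≤ m → (m : ℚ) * e m = (PowerSeries.coeff m A : ℤ) -
      ∑ i ∈ Finset.Ico 1 m, (e i : ℚ) * (PowerSeries.coeff (m - i) A : ℤ) := by
    intro m hm
    exact_mod_cast he m hm
  have hsum : ∀ m, m ≤ n → (∀ i, 1 ≤ i → i < m → c i = e i) →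
      ∑ i ∈ Finset.Ico 1 m, c i * (a (m - i) : ℚ) =
      ∑ i ∈ Finset.Ico 1 m, (e i : ℚ) * (PowerSeries.coeff (m - i) A : ℤ) := by
    intro m hm ih
    refine Finset.sum_congr rfl fun i hi => ?_
    obtain ⟨h1, h2⟩ := Finset.mem_Ico.1 hi
    rw [ih i h1 h2, hlt (m - i) (by omega) (by omega)]
  have hce : ∀ m, 1 ≤ m → m < n → c m = e m := by
    intro m
    induction m using Nat.strong_induction_on with
    | _ m ih =>
      intro h1 h2
      have h3 := hc m h1
      rw [hsum m h2.le (fun i hi hi' => ih i hi' hi (by omega)), ← hlt m h1 h2,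
        ← he' m h1] at h3
      exact mul_left_cancel₀ (by positivity) h3
  have key : (n : ℚ) * c n = n * e n + f n := by
    rw [hc n hn, hsum n le_rfl hce, he' n hn, ← heq]
    push_cast; ring
  have hn0 : (n : ℚ) ≠ 0 := by positivity
  constructor
  · rintro ⟨k, hk⟩
    refine ⟨e n + k, mul_left_cancel₀ hn0 ?_⟩
    rw [key, hk]; push_cast; ring
  · rintro ⟨k, hk⟩
    refine ⟨k - e n, ?_⟩
    rw [hk] at key
    have : (n : ℤ) * k = n * e n + f n := by exact_mod_cast key
    linarith

/-- Let `(c n)` be the generating sequence of the integer sequence `(a n)`, i.e. the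
sequence of rationals satisfying `n·c n = a n − c 1·a (n−1) − ⋯ − c (n−1)·a 1` for all
`n ≥ 1`.  Then `(a n)` is a Dold sequence if and only if every `c n` (for `n ≥ 1`) is an
integer. -/
theorem dold_iff_generating_integral (a : ℕ → ℤ) (c : ℕ → ℚ)
    (hc : ∀ n : ℕ, 1 ≤ n →
      (n : ℚ) * c n = (a n : ℚ) - ∑ i ∈ Finset.Ico 1 n, c i * (a (n - i) : ℚ)) :
    DoldSeq a ↔ ∀ n : ℕ, 1 ≤ n → ∃ k : ℤ, c n = (k : ℚ) := by
  have hf : ∀ n : ℕ, 0 < n → ∑ d ∈ n.divisors,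
      (∑ x ∈ d.divisors, ArithmeticFunction.moebius (d / x) * a x) = a n := by
    refine (ArithmeticFunction.sum_eq_iff_sum_mul_moebius_eq).2 fun n _ => ?_
    exact Nat.sum_divisorsAntidiagonal' (fun x y => ((ArithmeticFunction.moebius x : ℤ) : ℤ) * a y)
  have step := dold_step a c hc _ hf
  constructor
  · intro h n hn
    exact (step n hn fun m hm _ => h m hm).1 (h n hn)
  · intro h n
    induction n using Nat.strong_induction_on with
    | _ n ih =>
      intro hn
      exact (step n hn fun m hm hlt => ih m hlt hm).2 (h n hn)
end

section
/- Let (a_n)_{n≥1} be a Dold sequence of integers. Then (a_n) is bounded if and only if (a_n) is periodic; moreover, if (a_n) is bounded, then there exist finitely many integers b_1, …, b_N such that a_n = ∑_{k=1}^{N} b_k · reg_k(n) for all n ≥ 1. -/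
/-- The elementary periodic sequence `reg d`, with `reg d n = d` if `d ∣ n` and `0`
otherwise. -/
def reg (d n : ℕ) : ℤ := if d ∣ n then (d : ℤ) else 0

lemma card_div_bound (n : ℕ) : n.divisors.card ≤ 2 * n.sqrt := by
  have h : n.divisors ⊆ Finset.Icc 1 n.sqrt ∪ (Finset.Icc 1 n.sqrt).image (fun d => n / d) := by
    intro d hd
    rw [Nat.mem_divisors] at hd
    obtain ⟨⟨e, he⟩, hn⟩ := hd
    have hd0 : 0 < d := by
      rcases Nat.eq_zero_or_pos d with h | h
      · subst h; simp at he; exact absurd he hn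
      · exact h
    have he0 : 0 < e := by
      rcases Nat.eq_zero_or_pos e with h | h
      · subst h; simp at he; exact absurd he hn
      · exact h
    rw [Finset.mem_union, Finset.mem_image]
    by_cases hds : d ≤ n.sqrt
    · left; exact Finset.mem_Icc.2 ⟨hd0, hds⟩
    · right
      refine ⟨e, Finset.mem_Icc.2 ⟨he0, ?_⟩, ?_⟩
      · by_contra hes
        have h1 : n.sqrt + 1 ≤ d := by omega
        have h2 : n.sqrt + 1 ≤ e := by omega
        have h3 := Nat.mul_le_mul h1 h2
        have h4 := Nat.lt_succ_sqrt n
        simp only [Nat.succ_eq_add_one] at h4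
        omega
      · rw [he]; exact Nat.mul_div_cancel d he0
  calc _ ≤ _ := Finset.card_le_card h
    _ ≤ _ := Finset.card_union_le _ _
    _ ≤ n.sqrt + n.sqrt := by
      refine add_le_add (by simp) (Finset.card_image_le.trans (by simp))
    _ = _ := by ring

lemma dold_repr (a : ℕ → ℤ) (hdold : DoldSeq a) (T : ℤ) (hT : ∀ n : ℕ, 1 ≤ n → |a n| ≤ T) :
    ∃ (N : ℕ) (b : ℕ → ℤ), ∀ n : ℕ, 1 ≤ n → a n = ∑ k ∈ Finset.Icc 1 N, b k * reg k n := by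
  have hT0 : 0 ≤ T := (abs_nonneg _).trans (hT 1 le_rfl)
  let c : ℕ → ℤ := fun n => ∑ d ∈ n.divisors, ArithmeticFunction.moebius (n / d) * a d
  have hinv : ∀ n > 0, ∑ i ∈ n.divisors, c i = a n := by
    rw [ArithmeticFunction.sum_eq_iff_sum_mul_moebius_eq]
    intro n hn
    simp only [c]
    rw [← Nat.sum_divisorsAntidiagonal' (fun x y => ArithmeticFunction.moebius x * a y)]
    simp
  have hbound : ∀ n, 1 ≤ n → |c n| ≤ n.divisors.card * T := by
    intro n hn
    refine (Finset.abs_sum_le_sum_abs _ _).trans ?_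
    rw [← nsmul_eq_mul]
    refine Finset.sum_le_card_nsmul _ _ _ ?_
    intro d hd
    rw [abs_mul]
    have h1 : |ArithmeticFunction.moebius (n / d)| ≤ 1 := ArithmeticFunction.abs_moebius_le_one
    have h2 := hT d (Nat.pos_of_mem_divisors hd)
    calc _ ≤ 1 * T := mul_le_mul h1 h2 (abs_nonneg _) (by norm_num)
      _ = T := one_mul T
  obtain ⟨t, rfl⟩ := Int.eq_ofNat_of_zero_le hT0
  have hz : ∀ n, 4 * t ^ 2 < n → c n = 0 := by
    intro n hn
    have hn1 : 1 ≤ n := by omega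
    refine Int.eq_zero_of_abs_lt_dvd (hdold n hn1) ?_
    refine (hbound n hn1).trans_lt ?_
    have h1 := card_div_bound n
    have h2 := Nat.sqrt_le n
    have h3 : 2 * t < n.sqrt + 1 := by
      by_contra hh
      have h4 := Nat.lt_succ_sqrt n
      simp only [Nat.succ_eq_add_one] at h4
      nlinarith
    have h5 : 0 < n.sqrt := Nat.sqrt_pos.2 hn1
    have : n.divisors.card * t < n := by
      rcases Nat.lt_or_ge (2 * t) n.sqrt with h6 | h6
      · nlinarith
      · have h7 : n.sqrt = 2 * t := by omega
        rw [h7] at h1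
        nlinarith
    exact_mod_cast this
  choose! b hb using hdold
  refine ⟨4 * t ^ 2, b, fun n hn => ?_⟩
  rw [← hinv n hn]
  have hb' : ∀ k, 1 ≤ k → b k * reg k n = if k ∣ n then c k else 0 := by
    intro k hk
    unfold reg
    split_ifs
    · rw [mul_comm]; exact (hb k hk).symm
    · simp
  rw [Finset.sum_congr rfl (fun k hk => hb' k (Finset.mem_Icc.1 hk).1), ← Finset.sum_filter]
  symm
  apply Finset.sum_subset
  · intro k hk
    rw [Finset.mem_filter] at hk
    exact Nat.mem_divisors.2 ⟨hk.2, by omega⟩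
  · intro k hk hk'
    apply hz
    by_contra hh
    apply hk'
    rw [Finset.mem_filter, Finset.mem_Icc]
    exact ⟨⟨Nat.pos_of_mem_divisors hk, by omega⟩, Nat.dvd_of_mem_divisors hk⟩

/-- A Dold sequence is bounded if and only if it is periodic; moreover a bounded Dold
sequence is a finite integer linear combination of the elementary periodic sequences
`reg k`. -/
theorem dold_bounded_iff_periodic (a : ℕ → ℤ) (hdold : DoldSeq a) :
    ((∃ T : ℤ, ∀ n : ℕ, 1 ≤ n → |a n| ≤ T) ↔
      (∃ N : ℕ, 1 ≤ N ∧ ∀ n : ℕ, 1 ≤ n → a (n + N) = a n)) ∧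
    ((∃ T : ℤ, ∀ n : ℕ, 1 ≤ n → |a n| ≤ T) →
      ∃ (N : ℕ) (b : ℕ → ℤ), ∀ n : ℕ, 1 ≤ n → a n = ∑ k ∈ Finset.Icc 1 N, b k * reg k n) := by
  refine ⟨⟨?_, ?_⟩, fun ⟨T, hT⟩ => dold_repr a hdold T hT⟩
  · rintro ⟨T, hT⟩
    obtain ⟨N, b, h⟩ := dold_repr a hdold T hT
    refine ⟨N.factorial, N.factorial_pos, fun n hn => ?_⟩
    rw [h _ (by omega), h n hn]
    refine Finset.sum_congr rfl fun k hk => ?_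
    rw [Finset.mem_Icc] at hk
    have hd : k ∣ N.factorial := Nat.dvd_factorial hk.1 hk.2
    unfold reg
    simp only [Nat.dvd_add_left hd]
  · rintro ⟨N, hN, h⟩
    refine ⟨∑ i ∈ Finset.Icc 1 N, |a i|, fun n => ?_⟩
    induction n using Nat.strong_induction_on with
    | _ n ih =>
      intro hn
      by_cases hnN : n ≤ N
      · exact Finset.single_le_sum (f := fun i => |a i|) (fun i _ => abs_nonneg _)
          (Finset.mem_Icc.2 ⟨hn, hnN⟩)
      · have h1 := h (n - N) (by omega)
        rw [Nat.sub_add_cancel (by omega)] at h1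
        rw [h1]
        exact ih (n - N) (by omega) (by omega)
end

section
/- A sequence (a_n)_{n≥1} of integers is a Dold sequence if and only if for every n ≥ 1, n divides ∑_{d|n} φ(n/d)·a_d, where φ is the Euler totient function. -/
open ArithmeticFunction in
theorem aux_mul {f g : ArithmeticFunction ℤ} (hf : ∀ n : ℕ, (n : ℤ) ∣ f n)
    (hg : ∀ n : ℕ, (n : ℤ) ∣ g n) (n : ℕ) : (n : ℤ) ∣ (f * g) n := by
  rw [mul_apply]
  refine Finset.dvd_sum fun x hx => ?_
  rw [← (Nat.mem_divisorsAntidiagonal.1 hx).1]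
  push_cast
  exact mul_dvd_mul (hf _) (hg _)

def auxI : ArithmeticFunction ℤ := ⟨fun n => (n : ℤ), by simp⟩

def auxJ : ArithmeticFunction ℤ := ⟨fun n => (n : ℤ) * ArithmeticFunction.moebius n, by simp⟩

def auxP : ArithmeticFunction ℤ := ⟨fun n => (Nat.totient n : ℤ), by simp⟩

def auxA (a : ℕ → ℤ) : ArithmeticFunction ℤ := ⟨fun n => if n = 0 then 0 else a n, by simp⟩

theorem auxJI : auxJ * auxI = 1 := by
  ext n
  have h := congrArg (fun f : ArithmeticFunction ℤ => f n)
    ArithmeticFunction.moebius_mul_coe_zeta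
  simp only [ArithmeticFunction.coe_mul_zeta_apply] at h
  have h2 : (auxJ * auxI) n = (n : ℤ) * ∑ i ∈ n.divisors, ArithmeticFunction.moebius i := by
    rw [ArithmeticFunction.mul_apply, ← Nat.sum_divisorsAntidiagonal
      (f := fun i _ => ArithmeticFunction.moebius i), Finset.mul_sum]
    refine Finset.sum_congr rfl fun x hx => ?_
    rw [← (Nat.mem_divisorsAntidiagonal.1 hx).1]
    simp only [auxJ, auxI, ArithmeticFunction.coe_mk]
    push_cast
    ring
  rw [h2, h, ArithmeticFunction.one_apply]
  split_ifs with h1 <;> simp [h1]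

theorem auxPI : auxP = auxI * ArithmeticFunction.moebius := by
  have h : auxP * (ArithmeticFunction.zeta : ArithmeticFunction ℤ) = auxI := by
    ext n
    rw [ArithmeticFunction.coe_mul_zeta_apply]
    simp only [auxP, auxI, ArithmeticFunction.coe_mk]
    exact_mod_cast Nat.sum_totient n
  rw [← h, mul_assoc, ArithmeticFunction.coe_zeta_mul_moebius, mul_one]

theorem auxSum (f : ArithmeticFunction ℤ) (a : ℕ → ℤ) (n : ℕ) :
    ∑ d ∈ n.divisors, f (n / d) * a d = (f * auxA a) n := by
  rw [ArithmeticFunction.mul_apply,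
    Nat.sum_divisorsAntidiagonal' (f := fun x y => f x * auxA a y)]
  refine Finset.sum_congr rfl fun d hd => ?_
  have : d ≠ 0 := (Nat.pos_of_mem_divisors hd).ne'
  simp [auxA, this]

theorem auxAll (f : ArithmeticFunction ℤ) :
    (∀ n : ℕ, 1 ≤ n → (n : ℤ) ∣ f n) ↔ ∀ n : ℕ, (n : ℤ) ∣ f n := by
  refine ⟨fun h n => ?_, fun h n _ => h n⟩
  rcases Nat.eq_zero_or_pos n with rfl | hn
  · simp
  · exact h n hn

/-- A sequence of integers is a Dold sequence if and only if for every `n ≥ 1`,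
`n` divides `∑_{d ∣ n} φ(n/d) · a d`, where `φ` is the Euler totient function. -/
theorem dold_iff_totient (a : ℕ → ℤ) :
    DoldSeq a ↔
      ∀ n : ℕ, 1 ≤ n →
        (n : ℤ) ∣ ∑ d ∈ n.divisors, (Nat.totient (n / d) : ℤ) * a d := by
  have e : ∀ n : ℕ, ∑ d ∈ n.divisors, (Nat.totient (n / d) : ℤ) * a d = (auxP * auxA a) n :=
    fun n => auxSum auxP a n
  unfold DoldSeq
  simp only [e, auxSum]
  rw [auxAll, auxAll, auxPI, mul_assoc]
  constructor
  · exact fun h => aux_mul (fun n => dvd_refl _) h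
  · intro h
    have h3 := aux_mul (f := auxJ) (fun n => Dvd.intro _ rfl) h
    rwa [← mul_assoc, auxJI, one_mul] at h3
end

section
/- Let ψ : ℕ → ℤ be a function satisfying ψ(1) = 1 or ψ(1) = −1, and such that for every n ≥ 1, n divides ∑_{k|n} ψ(k). Then a sequence (a_n)_{n≥1} of integers is a Dold sequence if and only if for every n ≥ 1, n divides ∑_{k|n} ψ(n/k)·a_k. -/
open ArithmeticFunction in
theorem key_aux (F b : ArithmeticFunction ℤ) (h1 : F 1 = 1 ∨ F 1 = -1)
    (hF : ∀ n : ℕ, 1 ≤ n → (n : ℤ) ∣ F n) :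
    (∀ n : ℕ, 1 ≤ n → (n : ℤ) ∣ b n) ↔ (∀ n : ℕ, 1 ≤ n → (n : ℤ) ∣ (F * b) n) := by
  constructor
  · intro hb n hn
    rw [ArithmeticFunction.mul_apply]
    refine Finset.dvd_sum fun x hx => ?_
    obtain ⟨hx, h0⟩ := Nat.mem_divisorsAntidiagonal.1 hx
    have h3 : x.1 ≠ 0 := by rintro h; simp [h] at hx; omega
    have h4 : x.2 ≠ 0 := by rintro h; simp [h] at hx; omega
    rw [← hx, Nat.cast_mul]
    exact mul_dvd_mul (hF _ (by omega)) (hb _ (by omega))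
  · intro hb n
    induction n using Nat.strong_induction_on with
    | _ n ih =>
      intro hn
      have h := hb n hn
      have hm : ((1, n) : ℕ × ℕ) ∈ n.divisorsAntidiagonal := by
        rw [Nat.mem_divisorsAntidiagonal]; constructor
        · simp
        · omega
      rw [ArithmeticFunction.mul_apply, ← Finset.add_sum_erase _ _ hm] at h
      have h2 : (n : ℤ) ∣ ∑ x ∈ n.divisorsAntidiagonal.erase (1, n), F x.1 * b x.2 := by
        refine Finset.dvd_sum fun x hx => ?_
        obtain ⟨hne, hx⟩ := Finset.mem_erase.1 hx
        obtain ⟨hx, h0⟩ := Nat.mem_divisorsAntidiagonal.1 hx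
        have h3 : x.1 ≠ 0 := by rintro h; simp [h] at hx; omega
        have h4 : x.2 ≠ 0 := by rintro h; simp [h] at hx; omega
        have h5 : x.1 ≠ 1 := by
          rintro h
          apply hne
          rw [h, one_mul] at hx
          exact Prod.ext h hx
        have h6 : x.2 < n := by
          have : 2 ≤ x.1 := by omega
          nlinarith [Nat.pos_of_ne_zero h4]
        have h7 := mul_dvd_mul (hF x.1 (by omega)) (ih x.2 h6 (by omega))
        rw [← Nat.cast_mul, hx] at h7
        exact h7
      have h3 := (dvd_add_left h2).1 h
      rcases h1 with h1 | h1 <;> simpa [h1] using h3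

/-- (Wójcik) Let `ψ : ℕ → ℤ` satisfy `ψ(1) = ±1` and `n ∣ ∑_{k ∣ n} ψ(k)` for all
`n ≥ 1`.  Then `(a n)` is a Dold sequence if and only if `n ∣ ∑_{k ∣ n} ψ(n/k)·a k`
for all `n ≥ 1`. -/
theorem dold_iff_psi (ψ : ℕ → ℤ)
    (hψ1 : ψ 1 = 1 ∨ ψ 1 = -1)
    (hψ2 : ∀ n : ℕ, 1 ≤ n → (n : ℤ) ∣ ∑ k ∈ n.divisors, ψ k)
    (a : ℕ → ℤ) :
    DoldSeq a ↔
      ∀ n : ℕ, 1 ≤ n → (n : ℤ) ∣ ∑ k ∈ n.divisors, ψ (n / k) * a k := by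
  let A : ArithmeticFunction ℤ := ⟨fun n => if n = 0 then 0 else a n, by simp⟩
  let P : ArithmeticFunction ℤ := ⟨fun n => if n = 0 then 0 else ψ n, by simp⟩
  have hA : ∀ n, n ≠ 0 → A n = a n := fun n hn => if_neg hn
  have hP : ∀ n, n ≠ 0 → P n = ψ n := fun n hn => if_neg hn
  have hconv : ∀ (f g : ArithmeticFunction ℤ) (n : ℕ),
      (f * g) n = ∑ d ∈ n.divisors, f (n / d) * g d := fun f g n => by
    rw [ArithmeticFunction.mul_apply,
      Nat.sum_divisorsAntidiagonal' (f := fun x y => f x * g y)]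
  have hz : ∀ n, (P * (ArithmeticFunction.zeta : ArithmeticFunction ℤ)) n
      = ∑ k ∈ n.divisors, ψ k := fun n => by
    rw [ArithmeticFunction.coe_mul_zeta_apply]
    exact Finset.sum_congr rfl fun k hk => hP k (Nat.pos_of_mem_divisors hk).ne'
  have key := key_aux (P * (ArithmeticFunction.zeta : ArithmeticFunction ℤ))
    (ArithmeticFunction.moebius * A) (by rw [hz]; simpa using hψ1)
    (fun n hn => by rw [hz]; exact hψ2 n hn)
  have e : P * (ArithmeticFunction.zeta : ArithmeticFunction ℤ) * (ArithmeticFunction.moebius * A)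
      = P * A := by
    rw [mul_assoc, ← mul_assoc _ _ A, ArithmeticFunction.coe_zeta_mul_moebius, one_mul]
  rw [e] at key
  have l : ∀ n, (ArithmeticFunction.moebius * A) n
      = ∑ d ∈ n.divisors, ArithmeticFunction.moebius (n / d) * a d := fun n => by
    rw [hconv]
    exact Finset.sum_congr rfl fun k hk => by rw [hA k (Nat.pos_of_mem_divisors hk).ne']
  have r : ∀ n, (P * A) n = ∑ d ∈ n.divisors, ψ (n / d) * a d := fun n => by
    rw [hconv]
    refine Finset.sum_congr rfl fun k hk => ?_
    rw [hA k (Nat.pos_of_mem_divisors hk).ne', hP]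
    exact (Nat.div_pos (Nat.divisor_le hk) (Nat.pos_of_mem_divisors hk)).ne'
  simp only [l, r] at key
  exact key
end

section
/- Let (a_n)_{n≥1} be a sequence of integers. Then (a_n) is a periodic Lefschetz sequence if and only if (a_n) is a bounded Dold sequence. -/
/-- A sequence `(a n)` of integers is a Lefschetz sequence if there are square integer
matrices `A` and `B` (possibly of different sizes) with
`a n = trace (A ^ n) − trace (B ^ n)` for all `n ≥ 1`. -/
def IsLefschetzSeq (a : ℕ → ℤ) : Prop :=
  ∃ (k l : ℕ) (A : Matrix (Fin k) (Fin k) ℤ) (B : Matrix (Fin l) (Fin l) ℤ),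
    ∀ n : ℕ, 1 ≤ n → a n = (A ^ n).trace - (B ^ n).trace

/-- `-f' = f * R`. -/
def LDer (f R : PowerSeries ℤ) : Prop := -(PowerSeries.derivative ℤ f) = f * R

def DoldAt (N : ℕ) (s : ℕ → ℤ) : Prop :=
  (N : ℤ) ∣ ∑ d ∈ N.divisors, ArithmeticFunction.moebius (N / d) * s d

lemma DoldAt.add {N : ℕ} {s t : ℕ → ℤ} (hs : DoldAt N s) (ht : DoldAt N t) :
    DoldAt N (fun n => s n + t n) := by
  unfold DoldAt at *
  simp only [mul_add, Finset.sum_add_distrib]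
  exact dvd_add hs ht

lemma DoldAt.sub {N : ℕ} {s t : ℕ → ℤ} (hs : DoldAt N s) (ht : DoldAt N t) :
    DoldAt N (fun n => s n - t n) := by
  unfold DoldAt at *
  simp only [mul_sub, Finset.sum_sub_distrib]
  exact dvd_sub hs ht

lemma DoldAt.mul_left {N : ℕ} {s : ℕ → ℤ} (c : ℤ) (hs : DoldAt N s) :
    DoldAt N (fun n => c * s n) := by
  unfold DoldAt at *
  simp only [mul_left_comm _ c, ← Finset.mul_sum]
  exact dvd_mul_of_dvd_right hs c

lemma DoldAt.congr {N : ℕ} {s t : ℕ → ℤ} (hs : DoldAt N s) (h : ∀ n, 1 ≤ n → s n = t n) :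
    DoldAt N t := by
  unfold DoldAt at *
  convert hs using 1
  refine Finset.sum_congr rfl fun d hd => ?_
  rw [h d (Nat.pos_of_mem_divisors hd)]

lemma moebius_inv (a : ℕ → ℤ) (n : ℕ) (hn : 1 ≤ n) :
    ∑ d ∈ n.divisors, (∑ e ∈ d.divisors, ArithmeticFunction.moebius (d / e) * a e) = a n := by
  refine (ArithmeticFunction.sum_eq_iff_sum_mul_moebius_eq (R := ℤ)
    (f := fun d => ∑ e ∈ d.divisors, ArithmeticFunction.moebius (d / e) * a e) (g := a)).2 ?_ n hn
  intro m _
  rw [Nat.sum_divisorsAntidiagonal' (f := fun x y => (Int.cast (ArithmeticFunction.moebius x) : ℤ) * a y)]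
  simp

lemma doldAt_basic (N m : ℕ) (hm : 1 ≤ m) (hN : 1 ≤ N) :
    DoldAt N (fun n => if m ∣ n then (m : ℤ) else 0) := by
  have := (ArithmeticFunction.sum_eq_iff_sum_mul_moebius_eq (R := ℤ)
    (f := fun d => if d = m then (m : ℤ) else 0)
    (g := fun n => if m ∣ n then (m : ℤ) else 0)).1 (by
      intro n hn
      rw [Finset.sum_ite_eq']
      simp [hn.ne']) N hN
  rw [Nat.sum_divisorsAntidiagonal' (f := fun x y => (Int.cast (ArithmeticFunction.moebius x) : ℤ) *
    (if m ∣ y then (m : ℤ) else 0))] at this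
  simp only [Int.cast_id] at this
  unfold DoldAt
  rw [this]
  split_ifs with h
  · rw [h]
  · simp

lemma LDer.mul {f g R Q : PowerSeries ℤ} (hf : LDer f R) (hg : LDer g Q) :
    LDer (f * g) (R + Q) := by
  unfold LDer at *
  rw [Derivation.leibniz]
  simp only [smul_eq_mul]
  linear_combination g * hf + f * hg

lemma LDer.one : LDer 1 0 := by simp [LDer]

lemma LDer.pow {f R : PowerSeries ℤ} (hf : LDer f R) (c : ℕ) :
    LDer (f ^ c) ((c : PowerSeries ℤ) * R) := by
  induction c with
  | zero => simpa using LDer.one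
  | succ c ih =>
    rw [pow_succ]
    convert ih.mul hf using 1
    push_cast; ring

/-- logarithmic derivative of `1 - X^j` -/
noncomputable def basicR (j : ℕ) : PowerSeries ℤ :=
  PowerSeries.mk fun n => if j ∣ n + 1 then (j : ℤ) else 0

lemma LDer.minus (j : ℕ) (hj : 1 ≤ j) : LDer (1 - PowerSeries.X ^ j) (basicR j) := by
  unfold LDer
  ext n
  rw [sub_mul, one_mul, map_neg, PowerSeries.coeff_derivative,
    map_sub (PowerSeries.coeff n), PowerSeries.coeff_X_pow_mul']
  simp only [map_sub, PowerSeries.coeff_one, PowerSeries.coeff_X_pow, basicR, PowerSeries.coeff_mk]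
  by_cases h : j ≤ n
  · obtain ⟨k, rfl⟩ := Nat.exists_eq_add_of_le h
    have h1 : ¬ (j + k + 1 = j) := by omega
    have h2 : j + k - j + 1 = k + 1 := by omega
    have h3 : j ∣ j + k + 1 ↔ j ∣ k + 1 := by
      rw [add_assoc]; exact Nat.dvd_add_right (dvd_refl j)
    simp [h1, h2, h3]
  · by_cases h1 : n + 1 = j
    · subst h1
      simp
    · have : ¬ j ∣ n + 1 := fun hd => by
        have := Nat.le_of_dvd (by omega) hd
        omega
      simp [h, h1, this]

lemma LDer.plus (j : ℕ) (hj : 1 ≤ j) :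
    LDer (1 + PowerSeries.X ^ j) (basicR (2 * j) - basicR j) := by
  have h1 := LDer.minus j hj
  have h2 := LDer.minus (2 * j) (by omega)
  have hne : (1 - PowerSeries.X ^ j : PowerSeries ℤ) ≠ 0 := by
    intro h
    have := congrArg (PowerSeries.coeff 0) h
    have hj0 : j ≠ 0 := by omega
    simp [hj0] at this
  have hfac : (1 - PowerSeries.X ^ (2 * j) : PowerSeries ℤ) =
      (1 + PowerSeries.X ^ j) * (1 - PowerSeries.X ^ j) := by ring
  rw [hfac] at h2
  unfold LDer at *
  rw [Derivation.leibniz] at h2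
  simp only [smul_eq_mul] at h2
  apply mul_right_cancel₀ hne
  linear_combination h2 - (1 + PowerSeries.X ^ j) * h1

lemma pow_expand (e : ℤ) (j : ℕ) (hj : 1 ≤ j) (c : ℕ) :
    ∃ w : PowerSeries ℤ, (1 + (e : PowerSeries ℤ) * PowerSeries.X ^ j) ^ c =
      1 + (c : PowerSeries ℤ) * (e : PowerSeries ℤ) * PowerSeries.X ^ j + PowerSeries.X ^ (j + 1) * w := by
  obtain ⟨i, rfl⟩ := Nat.exists_eq_add_of_le' hj
  induction c with
  | zero => exact ⟨0, by simp⟩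
  | succ c ih =>
    obtain ⟨w, hw⟩ := ih
    refine ⟨w * (1 + (e : PowerSeries ℤ) * PowerSeries.X ^ (i + 1)) +
      (c : PowerSeries ℤ) * (e : PowerSeries ℤ) * (e : PowerSeries ℤ) * PowerSeries.X ^ i, ?_⟩
    rw [pow_succ, hw]
    push_cast
    ring

lemma dold_of_LDer (N : ℕ) (hN : 1 ≤ N) (k : ℕ) : ∀ (j : ℕ) (f R u : PowerSeries ℤ), 1 ≤ j →
    N + 1 ≤ j + k → f = 1 + PowerSeries.X ^ j * u → LDer f R →
    DoldAt N (fun n => PowerSeries.coeff (n - 1) R) := by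
  induction k with
  | zero =>
    intro j f R u hj hjk hf hR
    obtain ⟨i, rfl⟩ := Nat.exists_eq_add_of_le' hj
    have hR' : R = PowerSeries.X ^ i * (-((i + 1 : ℕ) : PowerSeries ℤ) * u
        - PowerSeries.X * PowerSeries.derivative ℤ u - PowerSeries.X * u * R) := by
      unfold LDer at hR
      rw [hf] at hR
      simp [Derivation.leibniz, Derivation.leibniz_pow] at hR
      push_cast
      linear_combination -hR
    unfold DoldAt
    rw [Finset.sum_eq_zero]
    · simp
    · intro d hd
      have h1 := Nat.pos_of_mem_divisors hd
      have h2 := Nat.divisor_le hd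
      beta_reduce
      rw [hR', PowerSeries.coeff_X_pow_mul', if_neg (by omega), mul_zero]
  | succ k ih =>
    intro j f R u hj hjk hf hR
    obtain ⟨v, hv⟩ : ∃ v : PowerSeries ℤ, u = ((PowerSeries.coeff 0 u : ℤ) : PowerSeries ℤ)
        + PowerSeries.X * v := by
      refine ⟨PowerSeries.mk fun p => PowerSeries.coeff (p + 1) u, ?_⟩
      have := PowerSeries.eq_X_mul_shift_add_const u
      rw [add_comm]
      simpa using this
    set c : ℤ := PowerSeries.coeff 0 u with hc
    have basic : ∀ m, 1 ≤ m → DoldAt N (fun n => PowerSeries.coeff (n - 1) (basicR m)) := by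
      intro m hm
      refine (doldAt_basic N m hm hN).congr fun n hn => ?_
      simp [basicR, Nat.sub_add_cancel hn]
    have key : ∀ (e : ℤ) (q : ℕ) (Q : PowerSeries ℤ), c = - (q * e) →
        LDer (1 + (e : PowerSeries ℤ) * PowerSeries.X ^ j) Q →
        DoldAt N (fun n => PowerSeries.coeff (n - 1) Q) →
        DoldAt N (fun n => PowerSeries.coeff (n - 1) R) := by
      intro e q Q hce hQ hD
      obtain ⟨w, hw⟩ := pow_expand e j hj q
      obtain ⟨i, rfl⟩ := Nat.exists_eq_add_of_le' hj
      have h := ih (i + 1 + 1) _ _ (w + v - (q : PowerSeries ℤ) * (e : PowerSeries ℤ) * ((q : PowerSeries ℤ) * (e : PowerSeries ℤ))  * PowerSeries.X ^ i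
          + PowerSeries.X ^ (i + 1) * u * w + (q : PowerSeries ℤ) * (e : PowerSeries ℤ) * PowerSeries.X ^ (i + 1) * v)
        (by omega) (by omega) (by
          rw [hf, hw]
          have hcc : (c : PowerSeries ℤ) = - ((q : PowerSeries ℤ) * (e : PowerSeries ℤ)) := by
            rw [hce]; push_cast; ring
          rw [hcc] at hv
          rw [hv]
          ring) (hR.mul (hQ.pow q))
      refine (h.sub (hD.mul_left (q : ℤ))).congr fun n hn => ?_
      have : (q : PowerSeries ℤ) = PowerSeries.C (q : ℤ) := by simp
      rw [map_add, this, PowerSeries.coeff_C_mul]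
      ring
    rcases le_total 0 c with h | h
    · refine key (-1) c.toNat (basicR j) (by simp [Int.toNat_of_nonneg h]) ?_ (basic j hj)
      have := LDer.minus j hj
      simpa [sub_eq_add_neg] using this
    · refine key 1 (-c).toNat (basicR (2 * j) - basicR j)
        (by rw [Int.toNat_of_nonneg (by omega)]; ring) ?_ ?_
      · simpa using LDer.plus j hj
      · refine ((basic (2 * j) (by omega)).sub (basic j hj)).congr fun n hn => ?_
        simp

lemma derivative_prod' {ι : Type} [DecidableEq ι] (s : Finset ι) (f : ι → PowerSeries ℤ) :
    PowerSeries.derivative ℤ (∏ i ∈ s, f i) =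
      ∑ i ∈ s, (∏ j ∈ s.erase i, f j) * PowerSeries.derivative ℤ (f i) := by
  induction s using Finset.induction_on with
  | empty => simp
  | insert a s ha ih =>
    rw [Finset.prod_insert ha, Derivation.leibniz, ih, Finset.sum_insert ha,
      Finset.erase_insert ha]
    simp only [smul_eq_mul]
    rw [add_comm, Finset.mul_sum]
    congr 1
    refine Finset.sum_congr rfl fun i hi => ?_
    have hne : a ≠ i := fun h => ha (h ▸ hi)
    rw [Finset.erase_insert_of_ne hne, Finset.prod_insert
      (fun h => ha (Finset.mem_of_mem_erase h))]
    ring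

lemma derivation_det {n : ℕ} (M : Matrix (Fin n) (Fin n) (PowerSeries ℤ)) :
    PowerSeries.derivative ℤ M.det =
      (M.adjugate * M.map (PowerSeries.derivative ℤ)).trace := by
  have h1 : (M.adjugate * M.map (PowerSeries.derivative ℤ)).trace =
      ∑ i, (M.updateCol i (fun j => PowerSeries.derivative ℤ (M j i))).det := by
    unfold Matrix.trace
    refine Finset.sum_congr rfl fun i _ => ?_
    rw [← Matrix.cramer_apply, Matrix.cramer_eq_adjugate_mulVec]
    rfl
  rw [h1]
  simp only [Matrix.det_apply]
  rw [map_sum, Finset.sum_comm]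
  refine Finset.sum_congr rfl fun σ _ => ?_
  rw [← Finset.smul_sum]
  have hs : ∀ (z : ℤˣ) (x : PowerSeries ℤ),
      PowerSeries.derivative ℤ (z • x) = z • PowerSeries.derivative ℤ x := by
    intro z x
    rw [Units.smul_def, Units.smul_def, map_zsmul]
  rw [hs]
  congr 1
  rw [derivative_prod']
  refine Finset.sum_congr rfl fun i _ => ?_
  rw [← Finset.mul_prod_erase _ _ (Finset.mem_univ i)]
  simp only [Matrix.updateCol_self, smul_eq_mul]
  rw [mul_comm]
  congr 1
  refine Finset.prod_congr rfl fun j hj => ?_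
  rw [Matrix.updateCol_ne (Finset.ne_of_mem_erase hj)]

lemma dold_trace {k : ℕ} (A : Matrix (Fin k) (Fin k) ℤ) (N : ℕ) (hN : 1 ≤ N) :
    DoldAt N (fun n => (A ^ n).trace) := by
  let A' : Matrix (Fin k) (Fin k) (PowerSeries ℤ) := A.map PowerSeries.C
  let M : Matrix (Fin k) (Fin k) (PowerSeries ℤ) := 1 - (PowerSeries.X : PowerSeries ℤ) • A'
  let G : Matrix (Fin k) (Fin k) (PowerSeries ℤ) :=
    Matrix.of fun i j => PowerSeries.mk fun n => (A ^ n) i j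
  have hMG : M * G = 1 := by
    have hM : M * G = G - (PowerSeries.X : PowerSeries ℤ) • (A' * G) := by
      simp only [M, sub_mul, one_mul, Matrix.smul_mul]
    rw [hM]
    ext i j n
    rw [Matrix.sub_apply, Matrix.smul_apply, Matrix.mul_apply, map_sub, smul_eq_mul]
    cases n with
    | zero => simp [G, Matrix.one_apply, apply_ite]
    | succ n =>
      rw [PowerSeries.coeff_succ_X_mul, map_sum]
      simp [G, A', pow_succ', Matrix.mul_apply, Matrix.one_apply, apply_ite,
        PowerSeries.coeff_one, -eq_intCast]
  have hadj : M.adjugate = M.det • G := by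
    calc M.adjugate = M.adjugate * (M * G) := by rw [hMG, mul_one]
      _ = M.det • G := by rw [← mul_assoc, Matrix.adjugate_mul, Matrix.smul_mul, one_mul]
  have hdM : M.map (PowerSeries.derivative ℤ) = - A' := by
    ext1 i j
    simp [M, A', Matrix.one_apply, Derivation.leibniz]
    split_ifs <;> simp
  have hL : LDer M.det (G * A').trace := by
    unfold LDer
    rw [derivation_det, hdM, hadj]
    simp
  have hc : ∀ n, PowerSeries.coeff n (G * A').trace = (A ^ (n + 1)).trace := by
    intro n
    simp [Matrix.trace, Matrix.mul_apply, G, A', pow_succ, -eq_intCast]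
  obtain ⟨u, hu⟩ : ∃ u, M.det = 1 + PowerSeries.X ^ 1 * u := by
    have h0 : PowerSeries.constantCoeff M.det = 1 := by
      rw [RingHom.map_det]
      have : (PowerSeries.constantCoeff (R := ℤ)).mapMatrix M = 1 := by
        ext i j
        simp [M, Matrix.one_apply, apply_ite]
      rw [this, Matrix.det_one]
    obtain ⟨u, hu⟩ := PowerSeries.X_dvd_iff.2 (show PowerSeries.constantCoeff (M.det - 1) = 0 by
      simp [h0])
    exact ⟨u, by rw [pow_one, ← hu]; ring⟩
  refine (dold_of_LDer N hN N 1 _ _ u le_rfl (by omega) hu hL).congr fun n hn => ?_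
  rw [hc, Nat.sub_add_cancel hn]

lemma lef_of_fintype {α β : Type} [Fintype α] [DecidableEq α] [Fintype β] [DecidableEq β]
    (a : ℕ → ℤ) (A : Matrix α α ℤ) (B : Matrix β β ℤ)
    (h : ∀ n : ℕ, 1 ≤ n → a n = (A ^ n).trace - (B ^ n).trace) : IsLefschetzSeq a := by
  have tr : ∀ {γ : Type} [Fintype γ] [DecidableEq γ] (C : Matrix γ γ ℤ) (n : ℕ),
      ((Matrix.reindexAlgEquiv ℤ ℤ (Fintype.equivFin γ) C) ^ n).trace = (C ^ n).trace := by
    intro γ _ _ C n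
    rw [← map_pow]
    simp only [Matrix.trace, Matrix.coe_reindexAlgEquiv, Matrix.reindex_apply, Matrix.diag,
      Matrix.submatrix_apply]
    try exact Equiv.sum_comp (Fintype.equivFin γ).symm (fun i => (C ^ n) i i)
  refine ⟨_, _, Matrix.reindexAlgEquiv ℤ ℤ (Fintype.equivFin α) A,
    Matrix.reindexAlgEquiv ℤ ℤ (Fintype.equivFin β) B, fun n hn => ?_⟩
  rw [tr, tr, h n hn]

def lefGroup : AddSubgroup (ℕ → ℤ) where
  carrier := {a | IsLefschetzSeq a}
  zero_mem' := ⟨0, 0, 0, 0, by simp⟩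
  neg_mem' := by
    rintro a ⟨k, l, A, B, h⟩
    exact ⟨l, k, B, A, fun n hn => by simp [h n hn]⟩
  add_mem' := by
    rintro a b ⟨k, l, A, B, h⟩ ⟨k', l', A', B', h'⟩
    refine lef_of_fintype _ (Matrix.fromBlocks A 0 0 A') (Matrix.fromBlocks B 0 0 B')
      fun n hn => ?_
    rw [Matrix.fromBlocks_diagonal_pow, Matrix.fromBlocks_diagonal_pow]
    simp [Matrix.trace, h n hn, h' n hn]
    ring

lemma lef_basic (d : ℕ) (hd : 1 ≤ d) :
    (fun n : ℕ => if d ∣ n then (d : ℤ) else 0) ∈ lefGroup := by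
  have : NeZero d := ⟨by omega⟩
  let P : Matrix (ZMod d) (ZMod d) ℤ := Matrix.of fun i j => if j = i + 1 then 1 else 0
  have hP : ∀ n : ℕ, P ^ n = Matrix.of fun i j => if j = i + (n : ZMod d) then 1 else 0 := by
    intro n
    induction n with
    | zero => ext i j; simp [Matrix.one_apply, eq_comm]
    | succ n ih =>
      rw [pow_succ, ih]
      ext i j
      simp only [Matrix.mul_apply, P, Matrix.of_apply, ite_mul, one_mul, zero_mul,
        Finset.sum_ite_eq', Finset.sum_ite_eq, Finset.mem_univ, if_true, add_assoc, Nat.cast_add, Nat.cast_one]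
  refine lef_of_fintype _ P (0 : Matrix (Fin 0) (Fin 0) ℤ) fun n hn => ?_
  rw [hP]
  simp [Matrix.trace, ZMod.natCast_eq_zero_iff, ZMod.card]

lemma card_divisors_sq (n : ℕ) : n.divisors.card ^ 2 ≤ 4 * n := by
  have h : n.divisors ⊆ (Finset.Icc 1 n.sqrt) ∪ (Finset.Icc 1 n.sqrt).image (fun d => n / d) := by
    intro d hd
    have hdvd := Nat.dvd_of_mem_divisors hd
    have hpos := Nat.pos_of_mem_divisors hd
    obtain ⟨e, rfl⟩ := hdvd
    have hn : d * e ≠ 0 := (Nat.mem_divisors.1 hd).2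
    have he : 0 < e := Nat.pos_of_ne_zero fun h => hn (by simp [h])
    simp only [Finset.mem_union, Finset.mem_Icc, Finset.mem_image]
    rcases le_total d e with hle | hle
    · left
      exact ⟨hpos, Nat.le_sqrt.2 (Nat.mul_le_mul_left _ hle)⟩
    · right
      exact ⟨e, ⟨he, Nat.le_sqrt.2 (Nat.mul_le_mul_right _ hle)⟩, Nat.mul_div_cancel _ he⟩
  have h2 : n.divisors.card ≤ 2 * n.sqrt := by
    refine (Finset.card_le_card h).trans ((Finset.card_union_le _ _).trans ?_)
    have := Finset.card_image_le (s := Finset.Icc 1 n.sqrt) (f := fun d => n / d)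
    simp only [Nat.card_Icc] at *
    omega
  have := Nat.sqrt_le n
  nlinarith

lemma dold_sum_zero (a : ℕ → ℤ) (ha : DoldSeq a) (T : ℤ) (hT : ∀ n : ℕ, 1 ≤ n → |a n| ≤ T)
    (n : ℕ) (hn : 1 ≤ n) (hnT : 4 * T ^ 2 < n) :
    ∑ d ∈ n.divisors, ArithmeticFunction.moebius (n / d) * a d = 0 := by
  by_contra hne
  have h1 : (n : ℤ) ≤ |∑ d ∈ n.divisors, ArithmeticFunction.moebius (n / d) * a d| :=
    Int.le_of_dvd (abs_pos.2 hne) ((dvd_abs _ _).2 (ha n hn))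
  have h2 : |∑ d ∈ n.divisors, ArithmeticFunction.moebius (n / d) * a d| ≤ n.divisors.card * T := by
    refine (Finset.abs_sum_le_sum_abs _ _).trans ?_
    rw [← nsmul_eq_mul]
    refine Finset.sum_le_card_nsmul _ _ _ fun d hd => ?_
    rw [abs_mul]
    have := hT d (Nat.pos_of_mem_divisors hd)
    have h3 := ArithmeticFunction.abs_moebius_le_one (n := n / d)
    nlinarith [abs_nonneg (a d)]
  have h3 : ((n.divisors.card : ℤ)) ^ 2 ≤ 4 * n := by exact_mod_cast card_divisors_sq n
  have h4 : (n : ℤ) ≤ n.divisors.card * T := h1.trans h2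
  have h5 : (1 : ℤ) ≤ n := by exact_mod_cast hn
  have h6 : (n : ℤ) ^ 2 ≤ (n.divisors.card * T) ^ 2 := by gcongr
  rw [mul_pow] at h6
  have h7 : (n.divisors.card : ℤ) ^ 2 * T ^ 2 ≤ 4 * n * T ^ 2 := by gcongr
  nlinarith

/-- An integer sequence is a periodic Lefschetz sequence if and only if it is a bounded
Dold sequence. -/
theorem periodic_lefschetz_iff_bounded_dold (a : ℕ → ℤ) :
    (IsLefschetzSeq a ∧ ∃ N : ℕ, 1 ≤ N ∧ ∀ n : ℕ, 1 ≤ n → a (n + N) = a n) ↔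
      (DoldSeq a ∧ ∃ T : ℤ, ∀ n : ℕ, 1 ≤ n → |a n| ≤ T) := by
  constructor
  · rintro ⟨⟨k, l, A, B, h⟩, N, hN, hper⟩
    constructor
    · intro n hn
      exact ((dold_trace A n hn).sub (dold_trace B n hn)).congr fun m hm => (h m hm).symm
    · refine ⟨∑ i ∈ Finset.Icc 1 N, |a i|, ?_⟩
      intro n
      induction n using Nat.strong_induction_on with
      | _ n ih =>
        intro hn
        by_cases hnN : n ≤ N
        · exact Finset.single_le_sum (f := fun i => |a i|) (fun i _ => abs_nonneg _)
            (Finset.mem_Icc.2 ⟨hn, hnN⟩)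
        · have := hper (n - N) (by omega)
          rw [Nat.sub_add_cancel (by omega)] at this
          rw [this]
          exact ih (n - N) (by omega) (by omega)
  · rintro ⟨ha, T, hT⟩
    have hz := dold_sum_zero a ha T hT
    choose! b hb using ha
    set M : ℕ := (4 * T ^ 2).toNat with hM
    have hMT : (M : ℤ) = 4 * T ^ 2 := Int.toNat_of_nonneg (by positivity)
    have hsum : ∀ n, 1 ≤ n → a n =
        (∑ d ∈ Finset.Icc 1 M, b d • (fun n : ℕ => if d ∣ n then (d : ℤ) else 0)) n := by
      intro n hn
      rw [← moebius_inv a n hn, Finset.sum_apply]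
      have h1 : ∀ d ∈ Finset.Icc 1 M, (b d • (fun n : ℕ => if d ∣ n then (d : ℤ) else 0)) n =
          if d ∣ n then (∑ e ∈ d.divisors, ArithmeticFunction.moebius (d / e) * a e) else 0 := by
        intro d hd
        rw [hb d (Finset.mem_Icc.1 hd).1]
        simp [mul_comm]
      rw [Finset.sum_congr rfl h1, ← Finset.sum_filter]
      symm
      apply Finset.sum_subset
      · intro d hd
        simp only [Finset.mem_filter, Finset.mem_Icc] at hd
        exact Nat.mem_divisors.2 ⟨hd.2, by omega⟩
      · intro d hd hd'
        have h1 := Nat.pos_of_mem_divisors hd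
        have h2 := Nat.dvd_of_mem_divisors hd
        apply hz d h1
        simp only [Finset.mem_filter, Finset.mem_Icc] at hd'
        have : M < d := by
          by_contra hle
          exact hd' ⟨⟨h1, by omega⟩, h2⟩
        rw [← hMT]
        exact_mod_cast this
    constructor
    · have hmem : (∑ d ∈ Finset.Icc 1 M, b d • (fun n : ℕ => if d ∣ n then (d : ℤ) else 0))
          ∈ lefGroup :=
        sum_mem fun d hd => zsmul_mem (lef_basic d (Finset.mem_Icc.1 hd).1) _
      obtain ⟨k, l, A, B, h⟩ := hmem
      exact ⟨k, l, A, B, fun n hn => by rw [hsum n hn, h n hn]⟩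
    · refine ⟨M.factorial, Nat.factorial_pos M, fun n hn => ?_⟩
      rw [hsum n hn, hsum _ (by omega), Finset.sum_apply, Finset.sum_apply]
      refine Finset.sum_congr rfl fun d hd => ?_
      rw [Finset.mem_Icc] at hd
      have : d ∣ n + M.factorial ↔ d ∣ n :=
        (Nat.dvd_add_left (Nat.dvd_factorial hd.1 hd.2))
      simp [this]
end

section
/- Let (a_n)_{n≥1} be a sequence of non-negative integers. There exist a set X and a map T : X → X such that for every n ≥ 1 the set {x ∈ X : T^n(x) = x} is finite of cardinality a_n, if and only if for every n ≥ 1 the integer ∑_{d|n} μ(n/d)·a_d is non-negative and divisible by n. -/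
open Function in
theorem fwd_dvd {X : Type} (T : X → X) (n : ℕ) (hn : 0 < n) (s : Finset X)
    (hs : ∀ x, x ∈ s ↔ minimalPeriod T x = n) : n ∣ s.card := by
  classical
  rw [Finset.card_eq_sum_card_image (fun x => periodicOrbit T x) s]
  refine Finset.dvd_sum fun b hb => ?_
  obtain ⟨x, hx, rfl⟩ := Finset.mem_image.1 hb
  have hxn := (hs x).1 hx
  have hp : x ∈ periodicPts T := minimalPeriod_pos_iff_mem_periodicPts.1 (by omega)
  have : s.filter (fun y => periodicOrbit T y = periodicOrbit T x)
      = (Finset.range n).image (fun i => T^[i] x) := by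
    ext y
    simp only [Finset.mem_filter, Finset.mem_image, Finset.mem_range]
    constructor
    · rintro ⟨hy, h⟩
      have hyn := (hs y).1 hy
      have hpy : y ∈ periodicPts T := minimalPeriod_pos_iff_mem_periodicPts.1 (by omega)
      have h2 := self_mem_periodicOrbit hpy
      rw [h, mem_periodicOrbit_iff hp] at h2
      obtain ⟨i, hi⟩ := h2
      refine ⟨i % n, Nat.mod_lt _ hn, ?_⟩
      rw [← hi, ← hxn, iterate_mod_minimalPeriod_eq]
    · rintro ⟨i, hi, rfl⟩
      refine ⟨(hs _).2 ?_, periodicOrbit_apply_iterate_eq hp i⟩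
      rw [minimalPeriod_apply_iterate hp, hxn]
  rw [this, Finset.card_image_of_injOn, Finset.card_range]
  intro i hi j hj h
  have := iterate_injOn_Iio_minimalPeriod (f := T) (x := x)
  rw [hxn] at this
  exact this (by simpa using hi) (by simpa using hj) h

theorem moebius_div_sum (a f : ℕ → ℕ) :
    (∀ n > 0, ∑ d ∈ n.divisors, f d = a n) ↔
      ∀ n > 0, ∑ d ∈ n.divisors, ArithmeticFunction.moebius (n / d) * (a d : ℤ) = f n := by
  have := ArithmeticFunction.sum_eq_iff_sum_mul_moebius_eq
    (f := fun n => (f n : ℤ)) (g := fun n => (a n : ℤ))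
  have h2 : ∀ n : ℕ, ∑ x ∈ n.divisorsAntidiagonal,
      ((ArithmeticFunction.moebius x.fst : ℤ) : ℤ) * (a x.snd : ℤ)
      = ∑ d ∈ n.divisors, ArithmeticFunction.moebius (n / d) * (a d : ℤ) := fun n =>
    Nat.sum_divisorsAntidiagonal' (fun i j => ArithmeticFunction.moebius i * (a j : ℤ))
  simp only [Int.cast_id, h2] at this
  rw [← this]
  refine forall₂_congr fun n hn => ?_
  norm_cast

open Function in
theorem fwd {X : Type} (T : X → X) (a : ℕ → ℕ) (h : ∀ n : ℕ, 1 ≤ n →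
        {x : X | T^[n] x = x}.Finite ∧ {x : X | T^[n] x = x}.ncard = a n) :
    ∃ f : ℕ → ℕ, (∀ n > 0, ∑ d ∈ n.divisors, f d = a n) ∧ ∀ n > 0, n ∣ f n := by
  classical
  have hfin : ∀ n, 0 < n → {x | minimalPeriod T x = n}.Finite := fun n hn =>
    (h n hn).1.subset fun x hx => by
      have hx : minimalPeriod T x = n := hx
      subst hx
      exact iterate_minimalPeriod
  refine ⟨fun n => {x | minimalPeriod T x = n}.ncard, fun n hn => ?_, fun n hn => ?_⟩
  · rw [← (h n hn).2, Set.ncard_eq_toFinset_card _ (h n hn).1,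
      Finset.card_eq_sum_card_fiberwise (f := minimalPeriod T) (t := n.divisors)]
    · refine Finset.sum_congr rfl fun d hd => ?_
      rw [← Set.ncard_coe_finset]
      refine congrArg Set.ncard ?_
      ext x
      simp only [Set.mem_ofPred_eq, Finset.coe_filter, Set.Finite.mem_toFinset]
      constructor
      · intro hx
        refine ⟨?_, hx⟩
        exact isPeriodicPt_iff_minimalPeriod_dvd.2 (hx ▸ Nat.dvd_of_mem_divisors hd)
      · exact fun hx => hx.2
    · intro x hx
      have hx : T^[n] x = x := by simpa using hx
      have : minimalPeriod T x ∣ n := isPeriodicPt_iff_minimalPeriod_dvd.1 hx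
      simpa using ⟨this, hn.ne'⟩
  · simp only
    rw [Set.ncard_eq_toFinset_card _ (hfin n hn)]
    exact fwd_dvd T n hn _ (by simp)

theorem bwd (a c : ℕ → ℕ) (h : ∀ n > 0, ∑ d ∈ n.divisors, d * c d = a n) :
    ∃ (X : Type) (T : X → X), ∀ n : ℕ, 1 ≤ n →
        {x : X | T^[n] x = x}.Finite ∧ {x : X | T^[n] x = x}.ncard = a n := by
  classical
  let T : (Σ n : ℕ, Fin (c (n+1)) × ZMod (n+1)) → (Σ n : ℕ, Fin (c (n+1)) × ZMod (n+1)) :=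
    fun x => ⟨x.1, x.2.1, x.2.2 + 1⟩
  refine ⟨_, T, fun k hk => ?_⟩
  have hT : ∀ k x, T^[k] x = ⟨x.1, x.2.1, x.2.2 + k⟩ := by
    intro k x
    induction k with
    | zero => simp
    | succ k ih =>
      rw [Function.iterate_succ_apply', ih]
      simp [T, add_assoc]
  have hS : {x | T^[k] x = x} = ((k.divisors.image (· - 1)).sigma
      (fun n => (Finset.univ : Finset (Fin (c (n+1)) × ZMod (n+1)))) : Finset _) := by
    ext ⟨n, j, z⟩
    have h1 : T^[k] ⟨n, j, z⟩ = ⟨n, j, z⟩ ↔ n + 1 ∣ k := by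
      rw [hT, ← ZMod.natCast_eq_zero_iff]
      simp
    simp only [Set.mem_ofPred_eq, h1, Finset.mem_coe, Finset.mem_sigma, Finset.mem_univ, and_true,
      Finset.mem_image, Nat.mem_divisors]
    constructor
    · exact fun h => ⟨n + 1, ⟨h, by omega⟩, by simp⟩
    · rintro ⟨d, ⟨hd, h0⟩, rfl⟩
      have : 0 < d := Nat.pos_of_dvd_of_pos hd hk
      rwa [Nat.sub_add_cancel this]
  rw [hS]
  refine ⟨Finset.finite_toSet _, ?_⟩
  rw [Set.ncard_coe_finset, Finset.card_sigma, Finset.sum_image, ← h k hk]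
  · refine Finset.sum_congr rfl fun d hd => ?_
    have : 0 < d := Nat.pos_of_mem_divisors hd
    obtain ⟨d, rfl⟩ : ∃ e, d = e + 1 := ⟨d - 1, by omega⟩
    simp [ZMod.card, mul_comm]
  · intro x hx y hy hxy
    have := Nat.pos_of_mem_divisors hx
    have := Nat.pos_of_mem_divisors hy
    simp only at hxy
    omega

/-- A sequence of non-negative integers is realizable by a map `T` of a set `X` (meaning
`a n` counts the points fixed by the `n`-th iterate of `T`) if and only if, for every
`n ≥ 1`, the Möbius sum `∑_{d ∣ n} μ(n/d)·a d` is non-negative and divisible by `n`. -/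
theorem realizable_iff_moebius_sum_nonneg_and_dvd (a : ℕ → ℕ) :
    (∃ (X : Type) (T : X → X), ∀ n : ℕ, 1 ≤ n →
        {x : X | T^[n] x = x}.Finite ∧ {x : X | T^[n] x = x}.ncard = a n) ↔
      ∀ n : ℕ, 1 ≤ n →
        0 ≤ (∑ d ∈ n.divisors, ArithmeticFunction.moebius (n / d) * (a d : ℤ)) ∧
        (n : ℤ) ∣ ∑ d ∈ n.divisors, ArithmeticFunction.moebius (n / d) * (a d : ℤ) := by
  constructor
  · rintro ⟨X, T, h⟩ n hn
    obtain ⟨f, hf, hd⟩ := fwd T a h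
    rw [(moebius_div_sum a f).1 hf n hn]
    exact ⟨Int.natCast_nonneg _, Int.natCast_dvd_natCast.2 (hd n hn)⟩
  · intro h
    have : ∀ n : ℕ, ∃ c : ℕ, 1 ≤ n →
        ∑ d ∈ n.divisors, ArithmeticFunction.moebius (n / d) * (a d : ℤ) = (n * c : ℕ) := by
      intro n
      by_cases hn : 1 ≤ n
      · obtain ⟨h0, c, hc⟩ := h n hn
        rw [hc] at h0
        have hc0 : 0 ≤ c := nonneg_of_mul_nonneg_right h0 (by exact_mod_cast hn)
        lift c to ℕ using hc0
        exact ⟨c, fun _ => by rw [hc]; push_cast; rfl⟩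
      · exact ⟨0, fun h => absurd h hn⟩
    choose c hc using this
    exact bwd a c ((moebius_div_sum a (fun n => n * c n)).2 hc)
end

section
/- Let (a_n)_{n≥1} be a sequence of non-negative integers. There exist a compact metric space X and a homeomorphism T : X → X such that for every n ≥ 1 the set {x ∈ X : T^n(x) = x} is finite of cardinality a_n, if and only if for every n ≥ 1 the integer ∑_{d|n} μ(n/d)·a_d is non-negative and divisible by n. -/
/-- A witness that the sequence `a` is realized by a homeomorphism of a compact metric
space: a compact metric space `X` and a homeomorphism `T : X ≃ₜ X` such that for each
`n ≥ 1` the set of points fixed by the `n`-th iterate of `T` is finite of cardinality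
`a n`. -/
structure CompactRealization (a : ℕ → ℕ) where
  X : Type
  [instMetric : MetricSpace X]
  [instCompact : CompactSpace X]
  T : X ≃ₜ X
  finite_fixed : ∀ n : ℕ, 1 ≤ n → {x : X | (⇑T)^[n] x = x}.Finite
  card_fixed : ∀ n : ℕ, 1 ≤ n → {x : X | (⇑T)^[n] x = x}.ncard = a n

open Function Filter Topology in
theorem cr_dvd_card {X : Type*} (f : X → X) (n : ℕ) (hn : 1 ≤ n) (P : Finset X)
    (hP : ∀ x, x ∈ P ↔ minimalPeriod f x = n) : n ∣ P.card := by
  classical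
  rw [Finset.card_eq_sum_card_image (periodicOrbit f) P]
  apply Finset.dvd_sum
  intro c hc
  obtain ⟨y, hy, rfl⟩ := Finset.mem_image.1 hc
  have hyn := (hP y).1 hy
  have hyp : y ∈ periodicPts f := minimalPeriod_pos_iff_mem_periodicPts.1 (by omega)
  have : {x ∈ P | periodicOrbit f x = periodicOrbit f y}
      = (Finset.range n).image (fun k => f^[k] y) := by
    ext x
    simp only [Finset.mem_filter, Finset.mem_image, Finset.mem_range]
    constructor
    · rintro ⟨hx, h⟩
      have hxp : x ∈ periodicPts f :=
        minimalPeriod_pos_iff_mem_periodicPts.1 (by rw [(hP x).1 hx]; omega)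
      have h1 := self_mem_periodicOrbit hxp
      rw [h, mem_periodicOrbit_iff hyp] at h1
      obtain ⟨k, hk⟩ := h1
      refine ⟨k % n, Nat.mod_lt _ (by omega), ?_⟩
      rw [← hk, ← hyn, iterate_mod_minimalPeriod_eq]
    · rintro ⟨k, -, rfl⟩
      refine ⟨(hP _).2 ?_, periodicOrbit_apply_iterate_eq hyp k⟩
      rw [minimalPeriod_apply_iterate hyp, hyn]
  rw [this, Finset.card_image_of_injOn, Finset.card_range]
  intro i hi j hj hij
  simp only [Finset.coe_range, Set.mem_Iio] at hi hj
  exact (iterate_eq_iterate_iff_of_lt_minimalPeriod (hyn ▸ hi) (hyn ▸ hj)).1 hij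

theorem cr_moebius (a : ℕ → ℕ) (c : ℕ → ℤ) :
    (∀ n > 0, ∑ d ∈ n.divisors, c d = (a n : ℤ)) ↔
    ∀ n > 0, ∑ d ∈ n.divisors, ArithmeticFunction.moebius (n / d) * (a d : ℤ) = c n := by
  rw [ArithmeticFunction.sum_eq_iff_sum_mul_moebius_eq]
  refine forall_congr' fun n => imp_congr_right fun _ => ?_
  simp only [Int.cast_id]
  rw [Nat.sum_divisorsAntidiagonal'
    (f := fun i j => ((ArithmeticFunction.moebius i : ℤ) : ℤ) * (a j : ℤ))]

open Function in
theorem cr_forward (a : ℕ → ℕ) (R : CompactRealization a) (n : ℕ) (hn : 1 ≤ n) :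
    0 ≤ (∑ d ∈ n.divisors, ArithmeticFunction.moebius (n / d) * (a d : ℤ)) ∧
        (n : ℤ) ∣ ∑ d ∈ n.divisors, ArithmeticFunction.moebius (n / d) * (a d : ℤ) := by
  classical
  obtain ⟨X, T, hfin, hcard⟩ := R
  have hf : ∀ d : ℕ, 1 ≤ d → {x : X | minimalPeriod T x = d}.Finite := by
    intro d hd
    refine (hfin d hd).subset ?_
    rintro x rfl
    exact iterate_minimalPeriod
  have key := (cr_moebius a (fun d => ({x : X | minimalPeriod T x = d}.ncard : ℤ))).1 (by
    intro m hm
    rw [← hcard m hm]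
    norm_cast
    have : {x : X | (⇑T)^[m] x = x} = ⋃ d ∈ m.divisors, {x : X | minimalPeriod T x = d} := by
      ext x
      simp only [Set.mem_iUnion, Set.mem_ofPred_eq, Nat.mem_divisors, exists_prop,
        exists_eq_right']
      exact ⟨fun h => ⟨IsPeriodicPt.minimalPeriod_dvd h, hm.ne'⟩,
        fun h => isPeriodicPt_iff_minimalPeriod_dvd.2 h.1⟩
    have h2 : {x : X | (⇑T)^[m] x = x} = ((hfin m hm).toFinset : Set X) := by simp
    rw [h2, Set.ncard_coe_finset, Finset.card_eq_sum_card_fiberwise (f := minimalPeriod T)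
      (t := m.divisors)]
    · refine Finset.sum_congr rfl fun d hd => ?_
      rw [← Set.ncard_coe_finset]
      congr 1
      ext x
      simp only [Set.mem_ofPred_eq, Finset.coe_filter, Set.Finite.mem_toFinset]
      constructor
      · rintro rfl
        exact ⟨isPeriodicPt_iff_minimalPeriod_dvd.2 (Nat.dvd_of_mem_divisors hd), rfl⟩
      · exact fun h => h.2
    · intro x hx
      simp only [Finset.mem_coe, Set.Finite.mem_toFinset, Set.mem_ofPred_eq] at hx
      exact Finset.mem_coe.2 (Nat.mem_divisors.2 ⟨IsPeriodicPt.minimalPeriod_dvd hx, hm.ne'⟩)) n hn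
  rw [key]
  refine ⟨by positivity, ?_⟩
  norm_cast
  have h := cr_dvd_card T n hn (hf n hn).toFinset (by simp)
  rwa [← Set.ncard_eq_toFinset_card _ (hf n hn)] at h

open Filter Topology in
theorem cr_metrizable (ι : Type) [TopologicalSpace ι] [DiscreteTopology ι] [Countable ι] :
    TopologicalSpace.MetrizableSpace (OnePoint ι) := by
  obtain ⟨e, he⟩ := exists_injective_nat ι
  let g : OnePoint ι → ℝ := fun x => OnePoint.elim x 0 (fun i => 1 / ((e i : ℝ) + 1))
  have hc : Continuous g := by
    rw [OnePoint.continuous_iff_from_discrete]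
    have := (tendsto_one_div_add_atTop_nhds_zero_nat (𝕜 := ℝ)).comp
      (Nat.cofinite_eq_atTop ▸ he.tendsto_cofinite)
    exact this
  have hi : Function.Injective g := by
    intro x y h
    induction x using OnePoint.rec <;> induction y using OnePoint.rec
    · rfl
    · rename_i j
      have : (0:ℝ) < 1 / ((e j : ℝ) + 1) := by positivity
      exact absurd h this.ne
    · rename_i j
      have : (0:ℝ) < 1 / ((e j : ℝ) + 1) := by positivity
      exact absurd h this.ne'
    · rename_i i j
      have h' : 1 / ((e i : ℝ) + 1) = 1 / ((e j : ℝ) + 1) := h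
      have : e i = e j := by
        have := congrArg (fun x => x⁻¹) h'
        simpa using this
      rw [he this]
  exact (hc.isClosedEmbedding hi).metrizableSpace

open Filter Topology in
/-- steps -/
theorem cr_steps : ∃ (s : ℕ → UnitAddCircle × UnitAddCircle) (l : UnitAddCircle × UnitAddCircle),
    (∀ d, 0 < d → addOrderOf (s d) = d) ∧ (∀ n : ℕ, 0 < n → n • l ≠ 0) ∧
    Tendsto s atTop (𝓝 l) := by
  refine ⟨fun d => ((((⌊√2 * (d:ℝ)⌋₊ : ℝ) / (d:ℝ) : ℝ) : UnitAddCircle),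
    (((1:ℝ) / (d:ℝ) : ℝ) : UnitAddCircle)), (((√2 : ℝ) : UnitAddCircle), ((0:ℝ) : UnitAddCircle)),
    ?_, ?_, ?_⟩
  · intro d hd
    rw [Prod.addOrderOf_mk]
    have h2 : addOrderOf (((1:ℝ) / (d:ℝ) : ℝ) : UnitAddCircle) = d :=
      AddCircle.addOrderOf_period_div hd
    rw [h2]
    apply Nat.lcm_eq_right
    apply addOrderOf_dvd_of_nsmul_eq_zero
    rw [← AddCircle.coe_nsmul, AddCircle.coe_eq_zero_iff]
    refine ⟨⌊√2 * (d:ℝ)⌋₊, ?_⟩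
    have : (d:ℝ) ≠ 0 := by positivity
    simp
    field_simp
  · intro n hn h
    have h1 := congrArg Prod.fst h
    change n • ((√2 : ℝ) : UnitAddCircle) = 0 at h1
    rw [← AddCircle.coe_nsmul, AddCircle.coe_eq_zero_iff] at h1
    obtain ⟨k, hk⟩ := h1
    have h3 : Irrational ((n:ℝ) * √2) := irrational_sqrt_two.natCast_mul hn.ne'
    apply h3
    refine ⟨k, ?_⟩
    simpa using hk
  · refine Tendsto.prodMk_nhds ?_ ?_
    · exact ((AddCircle.continuous_mk' (1:ℝ)).tendsto _).comp
        ((tendsto_nat_floor_mul_div_atTop (Real.sqrt_nonneg 2)).comp tendsto_natCast_atTop_atTop)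
    · exact ((AddCircle.continuous_mk' (1:ℝ)).tendsto _).comp
        (tendsto_one_div_atTop_nhds_zero_nat)

open Filter Topology in
theorem cr_backward (a b : ℕ → ℕ) (hb0 : b 0 = 0)
    (hab : ∀ n, 1 ≤ n → ∑ d ∈ n.divisors, b d * d = a n) :
    Nonempty (CompactRealization a) := by
  classical
  obtain ⟨s, l, hs, hl, hsl⟩ := cr_steps
  let K := UnitAddCircle × UnitAddCircle
  let ι := Σ d : ℕ, Fin (b d)
  have hpos : ∀ i : ι, 0 < i.1 := by
    rintro ⟨d, j⟩
    rcases Nat.eq_zero_or_pos d with rfl | h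
    · rw [hb0] at j; exact j.elim0
    · exact h
  let st : OnePoint ι → K := fun x => OnePoint.elim x l (fun i => s i.1)
  have hst : Continuous st := by
    rw [OnePoint.continuous_iff_from_discrete]
    have h1 : Tendsto (fun i : ι => i.1) cofinite atTop := by
      rw [← Nat.cofinite_eq_atTop]
      refine Tendsto.cofinite_of_finite_preimage_singleton fun d => ?_
      refine (Set.finite_range (fun j : Fin (b d) => (⟨d, j⟩ : ι))).subset ?_
      rintro ⟨d', j⟩ h
      obtain rfl : d' = d := h
      exact ⟨j, rfl⟩
    exact hsl.comp h1
  let S : Set (OnePoint ι × K) :=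
    ⋂ i : ι, {p | p.1 ≠ (i : OnePoint ι)} ∪ {p | p.2 ∈ AddSubgroup.zmultiples (s i.1)}
  have hfinz : ∀ d, 0 < d → Finite (AddSubgroup.zmultiples (s d)) := by
    intro d hd
    apply Nat.finite_of_card_ne_zero
    rw [Nat.card_zmultiples, hs d hd]
    exact hd.ne'
  have hS : IsClosed S := by
    refine isClosed_iInter fun i => IsClosed.union ?_ ?_
    · have : IsOpen ({(i : OnePoint ι)} : Set (OnePoint ι)) := by
        have := OnePoint.isOpenMap_coe (X := ι) {i} (isOpen_discrete _)
        simpa using this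
      exact (this.isClosed_compl).preimage continuous_fst
    · have : Set.Finite (AddSubgroup.zmultiples (s i.1) : Set K) :=
        Set.finite_coe_iff.1 (hfinz _ (hpos i))
      exact this.isClosed.preimage continuous_snd
  have hmem : ∀ p : OnePoint ι × K, p ∈ S ↔ ∀ i : ι, p.1 = i → p.2 ∈ AddSubgroup.zmultiples (s i.1) := by
    intro p
    simp only [S, Set.mem_iInter, Set.mem_union, Set.mem_ofPred_eq]
    exact forall_congr' fun i => by tauto
  let T : S ≃ₜ S :=
    { toFun := fun p => ⟨(p.1.1, p.1.2 + st p.1.1), (hmem _).2 fun i hi => by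
        have h := (hmem _).1 p.2 i hi
        have hi' : p.1.1 = i := hi
        have : st p.1.1 = s i.1 := by rw [hi']; rfl
        change p.1.2 + st p.1.1 ∈ _
        rw [this]
        exact add_mem h (AddSubgroup.mem_zmultiples _)⟩
      invFun := fun p => ⟨(p.1.1, p.1.2 - st p.1.1), (hmem _).2 fun i hi => by
        have h := (hmem _).1 p.2 i hi
        have hi' : p.1.1 = i := hi
        have : st p.1.1 = s i.1 := by rw [hi']; rfl
        change p.1.2 - st p.1.1 ∈ _
        rw [this]
        exact sub_mem h (AddSubgroup.mem_zmultiples _)⟩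
      left_inv := fun p => Subtype.ext (Prod.ext rfl (add_sub_cancel_right _ _))
      right_inv := fun p => Subtype.ext (Prod.ext rfl (sub_add_cancel _ _))
      continuous_toFun := by fun_prop
      continuous_invFun := by fun_prop }
  have hT : ∀ (n : ℕ) (p : S), ((⇑T)^[n] p).1 = (p.1.1, p.1.2 + n • st p.1.1) := by
    intro n
    induction n with
    | zero => intro p; simp
    | succ n ih =>
      intro p
      rw [Function.iterate_succ_apply, ih]
      refine Prod.ext rfl ?_
      change p.1.2 + st p.1.1 + n • st p.1.1 = p.1.2 + (n+1) • st p.1.1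
      rw [succ_nsmul, add_assoc, add_comm (n • _)]
  have hfix : ∀ (n : ℕ) (p : S), (⇑T)^[n] p = p ↔ n • st p.1.1 = 0 := by
    intro n p
    rw [Subtype.ext_iff, hT, Prod.ext_iff]
    simp
  have hcount : ∀ n, 1 ≤ n → ∃ F : (Σ d : n.divisors, Fin (b d.1) × AddSubgroup.zmultiples (s d.1)) →
      {x : S | (⇑T)^[n] x = x}, Function.Bijective F := by
    intro n hn
    refine ⟨fun q => ⟨⟨((⟨q.1.1, q.2.1⟩ : ι), q.2.2.1), (hmem _).2 fun i hi => ?_⟩, ?_⟩, ?_, ?_⟩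
    · obtain rfl := OnePoint.coe_injective hi
      exact q.2.2.2
    · refine (hfix _ _).2 ?_
      change n • s q.1.1 = 0
      rw [← addOrderOf_dvd_iff_nsmul_eq_zero, hs _ (Nat.pos_of_mem_divisors q.1.2)]
      exact Nat.dvd_of_mem_divisors q.1.2
    · rintro ⟨⟨d, hd⟩, j, z, hz⟩ ⟨⟨d', hd'⟩, j', z', hz'⟩ h
      have h1 := congrArg (fun x => x.1.1) h
      rw [Prod.ext_iff] at h1
      obtain ⟨h1, h2⟩ := h1
      have h3 := OnePoint.coe_injective h1
      simp only [Sigma.mk.injEq] at h3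
      obtain ⟨rfl, h3⟩ := h3
      obtain rfl := eq_of_heq h3
      obtain rfl : z = z' := h2
      rfl
    · rintro ⟨⟨⟨x, z⟩, hp⟩, hx⟩
      have hx' := (hfix _ _).1 hx
      change n • st x = 0 at hx'
      induction x using OnePoint.rec with
      | infty => exact absurd hx' (hl n hn)
      | coe i =>
        change n • s i.1 = 0 at hx'
        rw [← addOrderOf_dvd_iff_nsmul_eq_zero, hs _ (hpos i)] at hx'
        exact ⟨⟨⟨i.1, Nat.mem_divisors.2 ⟨hx', by omega⟩⟩, i.2, z, (hmem _).1 hp i rfl⟩, rfl⟩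
  have hfin' : ∀ n : ℕ, Finite (Σ d : n.divisors, Fin (b d.1) × AddSubgroup.zmultiples (s d.1)) := by
    intro n
    have : ∀ d : n.divisors, Finite (AddSubgroup.zmultiples (s d.1)) :=
      fun d => hfinz _ (Nat.pos_of_mem_divisors d.2)
    infer_instance
  have := cr_metrizable ι
  let _ : MetricSpace S := TopologicalSpace.metrizableSpaceMetric S
  have : CompactSpace S := isCompact_iff_compactSpace.1 hS.isCompact
  refine ⟨⟨S, T, ?_, ?_⟩⟩
  · intro n hn
    obtain ⟨F, hF⟩ := hcount n hn
    have := hfin' n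
    exact Set.finite_coe_iff.1 (Finite.of_surjective F hF.2)
  · intro n hn
    obtain ⟨F, hF⟩ := hcount n hn
    have : ∀ d : n.divisors, Finite (AddSubgroup.zmultiples (s d.1)) :=
      fun d => hfinz _ (Nat.pos_of_mem_divisors d.2)
    rw [← Nat.card_coe_set_eq, ← Nat.card_eq_of_bijective F hF, Nat.card_sigma, ← hab n hn,
      ← Finset.sum_coe_sort n.divisors (fun d => b d * d)]
    refine Finset.sum_congr rfl fun d _ => ?_
    rw [Nat.card_prod, Nat.card_zmultiples, hs _ (Nat.pos_of_mem_divisors d.2)]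
    simp

/-- A sequence of non-negative integers is realizable by a homeomorphism of a compact
metric space if and only if, for every `n ≥ 1`, the Möbius sum `∑_{d ∣ n} μ(n/d)·a d`
is non-negative and divisible by `n`. -/
theorem compact_realizable_iff_moebius_sum_nonneg_and_dvd (a : ℕ → ℕ) :
    Nonempty (CompactRealization a) ↔
      ∀ n : ℕ, 1 ≤ n →
        0 ≤ (∑ d ∈ n.divisors, ArithmeticFunction.moebius (n / d) * (a d : ℤ)) ∧
        (n : ℤ) ∣ ∑ d ∈ n.divisors, ArithmeticFunction.moebius (n / d) * (a d : ℤ) := by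
  constructor
  · rintro ⟨R⟩ n hn
    exact cr_forward a R n hn
  · intro h
    let c : ℕ → ℤ := fun n => ∑ d ∈ n.divisors, ArithmeticFunction.moebius (n / d) * (a d : ℤ)
    have hc := (cr_moebius a c).2 (fun n _ => rfl)
    refine cr_backward a (fun d => (c d / d).toNat) (by simp [c]) fun n hn => ?_
    zify
    rw [← hc n hn]
    refine Finset.sum_congr rfl fun d hd => ?_
    have hd0 : 1 ≤ d := Nat.pos_of_mem_divisors hd
    obtain ⟨h1, h2⟩ := h d hd0
    change 0 ≤ c d at h1
    change (d : ℤ) ∣ c d at h2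
    rw [Int.toNat_of_nonneg (Int.ediv_nonneg h1 (by positivity))]
    exact Int.ediv_mul_cancel h2
end

section
/- For a sequence (a_n)_{n≥1} of integers, the following conditions are equivalent: (a) (a_n) is a Dold sequence; (b) there exist realizable sequences (x_n)_{n≥1} and (y_n)_{n≥1} with a_n = x_n − y_n for all n ≥ 1; (c) for every prime p and all integers n, ℓ ≥ 1, a_{n·p^ℓ} ≡ a_{n·p^{ℓ−1}} modulo p^ℓ. -/
/-- A sequence of non-negative integers is realizable if for every `n ≥ 1` the Möbius
sum `∑_{d ∣ n} μ(n/d)·a d` is non-negative and divisible by `n`. -/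
def Realizable (x : ℕ → ℕ) : Prop :=
  ∀ n : ℕ, 1 ≤ n →
    0 ≤ (∑ d ∈ n.divisors, ArithmeticFunction.moebius (n / d) * (x d : ℤ)) ∧
    (n : ℤ) ∣ ∑ d ∈ n.divisors, ArithmeticFunction.moebius (n / d) * (x d : ℤ)

theorem dold_aux_inv (a b : ℕ → ℤ) :
    (∀ n : ℕ, 0 < n → ∑ d ∈ n.divisors, b d = a n) ↔
    (∀ n : ℕ, 0 < n → ∑ d ∈ n.divisors, ArithmeticFunction.moebius (n / d) * a d = b n) := by
  rw [ArithmeticFunction.sum_eq_iff_sum_mul_moebius_eq]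
  refine forall_congr' fun n => forall_congr' fun _ => ?_
  rw [Nat.sum_divisorsAntidiagonal' (f := fun x y => ((Int.cast (ArithmeticFunction.moebius x) : ℤ)) * a y)]
  simp

theorem dold_aux_dvd {p n l d : ℕ} (hp : p.Prime) (hl : 1 ≤ l) (h : d ∣ n * p ^ l)
    (h' : ¬ d ∣ n * p ^ (l - 1)) : p ^ l ∣ d := by
  obtain ⟨e, he⟩ := h
  by_cases hpe : p ∣ e
  · obtain ⟨f, rfl⟩ := hpe
    exfalso
    apply h'
    refine ⟨f, ?_⟩
    obtain ⟨k, rfl⟩ : ∃ k, l = k + 1 := ⟨l - 1, by omega⟩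
    simp only [Nat.add_sub_cancel]
    apply Nat.eq_of_mul_eq_mul_left hp.pos
    rw [pow_succ] at he
    linarith
  · have hc : Nat.Coprime (p ^ l) e := Nat.Coprime.pow_left _ ((hp.coprime_iff_not_dvd).2 hpe)
    exact hc.dvd_of_dvd_mul_right (he ▸ Dvd.intro_left n rfl)

theorem dold_aux_sum (a b : ℕ → ℤ) (h : ∀ n : ℕ, 0 < n → ∑ d ∈ n.divisors, b d = a n)
    {p n l : ℕ} (hp : p.Prime) (hn : 1 ≤ n) :
    ∑ d ∈ (n * p ^ l).divisors \ (n * p ^ (l - 1)).divisors, b d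
      = a (n * p ^ l) - a (n * p ^ (l - 1)) := by
  have h1 : 0 < n * p ^ l := Nat.mul_pos hn (pow_pos hp.pos _)
  have h2 : 0 < n * p ^ (l - 1) := Nat.mul_pos hn (pow_pos hp.pos _)
  rw [← h _ h1, ← h _ h2, eq_sub_iff_add_eq]
  apply Finset.sum_sdiff
  apply Nat.divisors_subset_of_dvd h1.ne'
  exact Nat.mul_dvd_mul_left _ (pow_dvd_pow _ (Nat.sub_le _ _))

/-- For an integer sequence `(a n)`, the following are equivalent: (a) `(a n)` is a
Dold sequence; (b) `(a n)` is a difference of two realizable sequences; (c) for every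
prime `p` and all `n, ℓ ≥ 1`, `a (n·p^ℓ) ≡ a (n·p^(ℓ−1))` modulo `p^ℓ`. -/
theorem dold_iff_difference_of_realizable_iff_congruences (a : ℕ → ℤ) :
    (DoldSeq a ↔
      ∃ x y : ℕ → ℕ, Realizable x ∧ Realizable y ∧
        ∀ n : ℕ, 1 ≤ n → a n = (x n : ℤ) - (y n : ℤ)) ∧
    (DoldSeq a ↔
      ∀ p : ℕ, p.Prime → ∀ n l : ℕ, 1 ≤ n → 1 ≤ l →
        ((p : ℤ) ^ l) ∣ a (n * p ^ l) - a (n * p ^ (l - 1))) := by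
  obtain ⟨b, hb⟩ : ∃ b : ℕ → ℤ, ∀ n : ℕ, 0 < n →
      ∑ d ∈ n.divisors, ArithmeticFunction.moebius (n / d) * a d = b n := ⟨_, fun _ _ => rfl⟩
  have hs := (dold_aux_inv a b).2 hb
  have hD : DoldSeq a ↔ ∀ n : ℕ, 0 < n → (n : ℤ) ∣ b n :=
    forall_congr' fun n => forall_congr' fun hn => by rw [hb n hn]
  refine ⟨⟨fun h => ?_, ?_⟩, ⟨fun h => ?_, fun h => ?_⟩⟩
  · rw [hD] at h
    have key : ∀ c : ℕ → ℕ, (∀ n : ℕ, 0 < n → (n : ℤ) ∣ (c n : ℤ)) →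
        Realizable (fun n => ∑ d ∈ n.divisors, c d) := by
      intro c hc n hn
      have := (dold_aux_inv (fun n => ((∑ d ∈ n.divisors, c d : ℕ) : ℤ)) (fun n => (c n : ℤ))).1
        (fun n _ => by simp) n hn
      rw [this]
      exact ⟨Int.natCast_nonneg _, hc n hn⟩
    refine ⟨_, _, key (fun n => (b n).toNat) ?_, key (fun n => (-b n).toNat) ?_, ?_⟩
    · intro n hn
      have := h n hn
      rcases le_total 0 (b n) with h0 | h0
      · rwa [Int.toNat_of_nonneg h0]
      · simp [Int.toNat_of_nonpos h0]
    · intro n hn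
      have := h n hn
      rcases le_total 0 (-b n) with h0 | h0
      · rw [Int.toNat_of_nonneg h0]; exact (dvd_neg).2 this
      · simp [Int.toNat_of_nonpos h0]
    · intro n hn
      rw [← hs n hn]
      push_cast
      rw [← Finset.sum_sub_distrib]
      refine Finset.sum_congr rfl fun d _ => ?_
      omega
  · rintro ⟨x, y, hx, hy, hxy⟩ n hn
    have : ∑ d ∈ n.divisors, ArithmeticFunction.moebius (n / d) * a d
        = ∑ d ∈ n.divisors, ArithmeticFunction.moebius (n / d) * (x d : ℤ)
          - ∑ d ∈ n.divisors, ArithmeticFunction.moebius (n / d) * (y d : ℤ) := by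
      rw [← Finset.sum_sub_distrib]
      refine Finset.sum_congr rfl fun d hd => ?_
      rw [hxy d (Nat.pos_of_mem_divisors hd)]
      ring
    rw [this]
    exact dvd_sub (hx n hn).2 (hy n hn).2
  · rw [hD] at h
    intro p hp n l hn hl
    rw [← dold_aux_sum a b hs hp hn]
    refine Finset.dvd_sum fun d hd => ?_
    rw [Finset.mem_sdiff] at hd
    have h2 : n * p ^ (l - 1) ≠ 0 := (Nat.mul_pos hn (pow_pos hp.pos _)).ne'
    have hdp := Nat.pos_of_mem_divisors hd.1
    have := dold_aux_dvd hp hl (Nat.dvd_of_mem_divisors hd.1)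
      (fun hh => hd.2 (Nat.mem_divisors.2 ⟨hh, h2⟩))
    exact dvd_trans (by exact_mod_cast this) (h d hdp)
  · rw [hD]
    intro n
    induction n using Nat.strong_induction_on with
    | _ n ih =>
    intro hn
    rw [Int.natCast_dvd, Nat.dvd_iff_prime_pow_dvd_dvd]
    intro p l hp hpl
    rw [← Int.natCast_dvd]
    rcases Nat.eq_zero_or_pos l with rfl | hl
    · simp
    obtain ⟨m, hm⟩ := hpl
    rw [mul_comm] at hm
    have hm0 : 0 < m := Nat.pos_of_ne_zero (by rintro rfl; simp at hm; omega)
    have hc := h p hp m l hm0 hl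
    have h2 : m * p ^ (l - 1) ≠ 0 := (Nat.mul_pos hm0 (pow_pos hp.pos _)).ne'
    have hlt : m * p ^ (l - 1) < n := by
      rw [hm]
      exact Nat.mul_lt_mul_of_pos_left (Nat.pow_lt_pow_right hp.one_lt (by omega)) hm0
    rw [← dold_aux_sum a b hs hp hm0, ← hm] at hc
    have hmem : n ∈ n.divisors \ (m * p ^ (l - 1)).divisors := by
      rw [Finset.mem_sdiff]
      refine ⟨Nat.mem_divisors_self n hn.ne', fun hh => ?_⟩
      exact absurd (Nat.divisor_le hh) (not_le.2 hlt)
    rw [← Finset.add_sum_erase _ _ hmem] at hc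
    rw [Nat.cast_pow]
    refine (dvd_add_left (Finset.dvd_sum fun d hd => ?_)).1 hc
    rw [Finset.mem_erase, Finset.mem_sdiff] at hd
    obtain ⟨hdn, hd1, hd2⟩ := hd
    have := dold_aux_dvd hp hl (hm ▸ Nat.dvd_of_mem_divisors hd1)
      (fun hh => hd2 (Nat.mem_divisors.2 ⟨hh, h2⟩))
    exact dvd_trans (by exact_mod_cast this)
      (ih d (lt_of_le_of_ne (Nat.divisor_le hd1) hdn) (Nat.pos_of_mem_divisors hd1))
end

section
/- Let A be an m × m matrix with non-negative integer entries. Then the sequence (trace(A^n))_{n≥1} is realizable; that is, for every n ≥ 1 the integer ∑_{d|n} μ(n/d)·trace(A^d) is non-negative and divisible by n. -/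
namespace TraceReal
open Function

/-- Points of minimal period `n` come in orbits of size `n`. -/
lemma dvd_card {X : Type*} (T : X → X) (n : ℕ) (hn : 1 ≤ n) (Y : Finset X)
    (hY : ∀ x, x ∈ Y ↔ minimalPeriod T x = n) : n ∣ Y.card := by
  classical
  let orb : X → Finset X := fun x => (Finset.range n).image (fun k => T^[k] x)
  have hper : ∀ x ∈ Y, x ∈ periodicPts T := by
    intro x hx
    apply minimalPeriod_pos_iff_mem_periodicPts.1
    rw [(hY x).1 hx]; omega
  have hmem : ∀ x ∈ Y, ∀ z, z ∈ orb x ↔ ∃ k, T^[k] x = z := by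
    intro x hx z
    simp only [orb, Finset.mem_image, Finset.mem_range]
    constructor
    · rintro ⟨k, _, h⟩; exact ⟨k, h⟩
    · rintro ⟨k, h⟩
      refine ⟨k % n, Nat.mod_lt _ hn, ?_⟩
      rw [← h]
      have := iterate_mod_minimalPeriod_eq (f := T) (x := x) (n := k)
      rwa [(hY x).1 hx] at this
  have hcard : ∀ x ∈ Y, (orb x).card = n := by
    intro x hx
    have : (orb x).card = (Finset.range n).card := by
      apply Finset.card_image_of_injOn
      have := iterate_injOn_Iio_minimalPeriod (f := T) (x := x)
      rw [(hY x).1 hx] at this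
      intro a ha b hb h
      exact this (by simpa using ha) (by simpa using hb) h
    simpa using this
  rw [Finset.card_eq_sum_card_image orb Y]
  apply Finset.dvd_sum
  intro b hb
  obtain ⟨x, hx, rfl⟩ := Finset.mem_image.1 hb
  have : Y.filter (fun y => orb y = orb x) = orb x := by
    ext y
    simp only [Finset.mem_filter]
    constructor
    · rintro ⟨hy, h⟩
      rw [← h, hmem y hy]
      exact ⟨0, rfl⟩
    · intro h
      obtain ⟨k, rfl⟩ := (hmem x hx y).1 h
      have hy : T^[k] x ∈ Y := by
        rw [hY, minimalPeriod_apply_iterate (hper x hx), (hY x).1 hx]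
      refine ⟨hy, ?_⟩
      apply Finset.eq_of_subset_of_card_le
      · intro z hz
        obtain ⟨l, rfl⟩ := (hmem _ hy z).1 hz
        rw [hmem x hx]
        exact ⟨l + k, by rw [iterate_add_apply]⟩
      · rw [hcard x hx, hcard _ hy]
  rw [this, hcard x hx]

lemma realizable {X : Type*} (T : X → X) (a : ℕ → ℕ)
    (hfin : ∀ n, 1 ≤ n → {x | IsPeriodicPt T n x}.Finite)
    (ha : ∀ n, 1 ≤ n → {x | IsPeriodicPt T n x}.ncard = a n) (n : ℕ) (hn : 1 ≤ n) :
    0 ≤ (∑ d ∈ n.divisors, ArithmeticFunction.moebius (n / d) * (a d : ℤ)) ∧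
      (n : ℤ) ∣ ∑ d ∈ n.divisors, ArithmeticFunction.moebius (n / d) * (a d : ℤ) := by
  classical
  have hfin' : ∀ n, 1 ≤ n → {x | minimalPeriod T x = n}.Finite := by
    intro n hn
    apply (hfin n hn).subset
    rintro x rfl
    exact isPeriodicPt_minimalPeriod T x
  have key := (ArithmeticFunction.sum_eq_iff_sum_mul_moebius_eq
    (f := fun d => (({x | minimalPeriod T x = d}.ncard : ℕ) : ℤ)) (g := fun d => (a d : ℤ))).1 (by
      intro n hn
      norm_cast
      rw [← ha n hn, Set.ncard_eq_toFinset_card _ (hfin n hn)]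
      rw [Finset.card_eq_sum_card_fiberwise (f := minimalPeriod T) (t := n.divisors)]
      · apply Finset.sum_congr rfl
        intro d hd
        have hd' := Nat.dvd_of_mem_divisors hd
        rw [Set.ncard_eq_toFinset_card _ (hfin' d (Nat.pos_of_mem_divisors hd))]
        congr 1
        ext x
        simp only [Set.Finite.mem_toFinset, Set.mem_ofPred_eq, Finset.mem_filter,
          isPeriodicPt_iff_minimalPeriod_dvd]
        constructor
        · rintro rfl; exact ⟨hd', rfl⟩
        · exact fun h => h.2
      · intro x hx
        simp only [Set.Finite.coe_toFinset, Set.mem_ofPred_eq,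
          isPeriodicPt_iff_minimalPeriod_dvd] at hx
        simp only [Finset.mem_coe, Nat.mem_divisors]
        exact ⟨hx, by omega⟩) n hn
  simp only [Int.cast_id] at key
  rw [Nat.sum_divisorsAntidiagonal' (f := fun x y =>
    ArithmeticFunction.moebius x * (a y : ℤ))] at key
  rw [key]
  refine ⟨by positivity, ?_⟩
  norm_cast
  rw [Set.ncard_eq_toFinset_card _ (hfin' n hn)]
  exact dvd_card T n hn _ (by simp)

/-- Edges of the multigraph with adjacency matrix `A`. -/
abbrev Edge {m : ℕ} (A : Matrix (Fin m) (Fin m) ℕ) : Type :=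
  Σ i : Fin m, Σ j : Fin m, Fin (A i j)

instance {m : ℕ} (A : Matrix (Fin m) (Fin m) ℕ) (i : Fin m) :
    Fintype (Σ j : Fin m, Fin (A i j)) := inferInstance

instance {m : ℕ} (A : Matrix (Fin m) (Fin m) ℕ) : Fintype (Edge A) := inferInstance

/-- `f` is a path from `i` to `j`. -/
def IsP {m : ℕ} {A : Matrix (Fin m) (Fin m) ℕ} :
    (n : ℕ) → (Fin n → Edge A) → Fin m → Fin m → Prop
  | 0, _, i, j => i = j
  | n + 1, f, i, j => (f 0).1 = i ∧ IsP n (fun k => f k.succ) (f 0).2.1 j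

open Classical in
lemma pow_eq {m : ℕ} (A : Matrix (Fin m) (Fin m) ℕ) (n : ℕ) : ∀ i j,
    (A ^ n) i j = ∑ f : Fin n → Edge A, if IsP n f i j then 1 else 0 := by
  induction n with
  | zero => intro i j; simp [IsP, Matrix.one_apply]; congr
  | succ n ih =>
    intro i j
    rw [pow_succ', Matrix.mul_apply, ← (Fin.consEquiv (fun _ => Edge A)).sum_comp,
      Fintype.sum_prod_type]
    have : ∀ e : Edge A, (∑ f : Fin n → Edge A,
        if IsP (n+1) ((Fin.consEquiv (fun _ => Edge A)) (e, f)) i j then 1 else 0)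
        = if e.1 = i then (A ^ n) e.2.1 j else 0 := by
      intro e
      rw [ih]
      have hP : ∀ f : Fin n → Edge A, IsP (n+1) ((Fin.consEquiv (fun _ => Edge A)) (e, f)) i j
          ↔ e.1 = i ∧ IsP n f e.2.1 j := fun f => Iff.rfl
      by_cases h : e.1 = i <;> simp [hP, h]
    simp only [this]
    rw [Fintype.sum_sigma]
    simp [Fintype.sum_sigma]

lemma isP_iff {m : ℕ} {A : Matrix (Fin m) (Fin m) ℕ} (n : ℕ) :
    ∀ (f : Fin (n+1) → Edge A) i j, IsP (n+1) f i j ↔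
      (f 0).1 = i ∧ (f (Fin.last n)).2.1 = j ∧ ∀ k : Fin n, (f k.castSucc).2.1 = (f k.succ).1 := by
  induction n with
  | zero => intro f i j; simp [IsP]
  | succ n ih =>
    intro f i j
    rw [IsP, ih, Fin.forall_fin_succ (n := n)]
    simp only [Fin.succ_last, Fin.castSucc_zero, Fin.succ_castSucc]
    grind

/-- Closed paths. -/
def Closed {m : ℕ} {A : Matrix (Fin m) (Fin m) ℕ} (n : ℕ) (f : Fin (n+1) → Edge A) : Prop :=
  (f (Fin.last n)).2.1 = (f 0).1 ∧ ∀ k : Fin n, (f k.castSucc).2.1 = (f k.succ).1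

open Classical in
lemma trace_eq {m : ℕ} (A : Matrix (Fin m) (Fin m) ℕ) (n : ℕ) :
    (A ^ (n+1)).trace = Nat.card {f : Fin (n+1) → Edge A // Closed n f} := by
  rw [Nat.card_eq_fintype_card, Fintype.card_subtype, Finset.card_filter, Matrix.trace]
  simp only [Matrix.diag_apply, pow_eq]
  rw [Finset.sum_comm]
  apply Finset.sum_congr rfl
  intro f _
  simp only [isP_iff, Closed]
  rw [Finset.sum_eq_single (f 0).1]
  · simp only [true_and]; congr
  · intro b _ hb
    rw [if_neg]
    rintro ⟨h, _⟩
    exact hb h.symm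
  · simp

/-- The one-sided edge shift. -/
abbrev Shift {m : ℕ} (A : Matrix (Fin m) (Fin m) ℕ) : Type :=
  {x : ℕ → Edge A // ∀ k, (x k).2.1 = (x (k+1)).1}

/-- The shift map. -/
def sh {m : ℕ} (A : Matrix (Fin m) (Fin m) ℕ) (x : Shift A) : Shift A :=
  ⟨fun k => x.1 (k+1), fun k => x.2 (k+1)⟩

lemma sh_iter {m : ℕ} (A : Matrix (Fin m) (Fin m) ℕ) (n : ℕ) : ∀ (x : Shift A) k,
    ((sh A)^[n] x).1 k = x.1 (k + n) := by
  induction n with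
  | zero => intro x k; rfl
  | succ n ih =>
    intro x k
    rw [iterate_succ_apply, ih]
    simp [sh, add_assoc]

lemma per_iff {m : ℕ} (A : Matrix (Fin m) (Fin m) ℕ) (n : ℕ) (x : Shift A) :
    IsPeriodicPt (sh A) n x ↔ ∀ k, x.1 (k + n) = x.1 k := by
  rw [IsPeriodicPt, IsFixedPt, Subtype.ext_iff, funext_iff]
  simp only [sh_iter]

/-- Periodic points are closed paths. -/
def eqv {m : ℕ} (A : Matrix (Fin m) (Fin m) ℕ) (n : ℕ) :
    {x | IsPeriodicPt (sh A) (n+1) x} ≃ {f : Fin (n+1) → Edge A // Closed n f} where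
  toFun x := ⟨fun k => x.1.1 k, by
    constructor
    · have h := (per_iff A _ _).1 x.2 0
      have h2 := x.1.2 n
      rw [zero_add] at h
      rw [h] at h2
      simpa using h2
    · intro k
      simpa using x.1.2 k⟩
  invFun f := ⟨⟨fun k => f.1 ⟨k % (n+1), Nat.mod_lt _ (by omega)⟩, by
    intro k
    obtain ⟨f, h0, h1⟩ := f
    have hk : k % (n+1) < n+1 := Nat.mod_lt _ (by omega)
    by_cases h : k % (n+1) = n
    · have h' : (k+1) % (n+1) = 0 := by
        rw [Nat.add_mod, h]; rcases n with _ | n <;> simp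
      have e : (⟨k % (n+1), hk⟩ : Fin (n+1)) = Fin.last n := Fin.ext h
      have e' : (⟨(k+1) % (n+1), Nat.mod_lt _ (by omega)⟩ : Fin (n+1)) = 0 := Fin.ext h'
      change (f ⟨k % (n+1), hk⟩).2.1 = (f ⟨(k+1) % (n+1), Nat.mod_lt _ (by omega)⟩).1
      rw [e, e']
      exact h0
    · have h' : (k+1) % (n+1) = k % (n+1) + 1 := by
        rw [Nat.add_mod_eq_ite]
        rcases n with _ | n
        · omega
        · simp; omega
      simp only [h']
      exact h1 ⟨k % (n+1), by omega⟩⟩, by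
    rw [Set.mem_ofPred_eq, per_iff]
    intro k
    simp⟩
  left_inv x := by
    apply Subtype.ext
    apply Subtype.ext
    funext k
    have h := (per_iff A _ _).1 x.2
    exact (Function.Periodic.map_mod_nat h k)
  right_inv f := by
    apply Subtype.ext
    funext k
    simp [Nat.mod_eq_of_lt k.2]

end TraceReal


/-- If `A` is a square matrix with non-negative integer entries, then the sequence
`(trace (A ^ n))` is realizable: for every `n ≥ 1` the Möbius sum
`∑_{d ∣ n} μ(n/d)·trace (A ^ d)` is non-negative and divisible by `n`. -/
theorem trace_pow_nonneg_matrix_realizable (m : ℕ) (A : Matrix (Fin m) (Fin m) ℕ) :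
    ∀ n : ℕ, 1 ≤ n →
      0 ≤ (∑ d ∈ n.divisors, ArithmeticFunction.moebius (n / d) * ((A ^ d).trace : ℤ)) ∧
      (n : ℤ) ∣ ∑ d ∈ n.divisors, ArithmeticFunction.moebius (n / d) * ((A ^ d).trace : ℤ) := by

  apply TraceReal.realizable (TraceReal.sh A) (fun n => (A ^ n).trace)
  · intro n hn
    obtain ⟨n, rfl⟩ := Nat.exists_eq_add_of_le' hn
    exact Set.finite_coe_iff.1 (Finite.of_equiv _ (TraceReal.eqv A n).symm)
  · intro n hn
    obtain ⟨n, rfl⟩ := Nat.exists_eq_add_of_le' hn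
    rw [TraceReal.trace_eq]
    exact Nat.card_congr (TraceReal.eqv A n)
end

section
/- Let B be a square matrix with integer entries. Then the sequence (trace(B^n))_{n≥1} is a Dold sequence; that is, for every n ≥ 1, n divides ∑_{d|n} μ(n/d)·trace(B^d). -/
open PowerSeries in
/-- logarithmic derivative -/
noncomputable def doldL (u : (PowerSeries ℤ)ˣ) : PowerSeries ℤ :=
  X * derivative ℤ (u : PowerSeries ℤ) * ((u⁻¹ : (PowerSeries ℤ)ˣ) : PowerSeries ℤ)

/-- Dold sum -/
noncomputable def doldD (n : ℕ) (E : PowerSeries ℤ) : ℤ :=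
  ∑ d ∈ n.divisors, ArithmeticFunction.moebius (n / d) * PowerSeries.coeff d E

lemma doldD_add (n : ℕ) (E F : PowerSeries ℤ) : doldD n (E + F) = doldD n E + doldD n F := by
  simp [doldD, mul_add, Finset.sum_add_distrib]

lemma doldL_eq (u : (PowerSeries ℤ)ˣ) (E : PowerSeries ℤ)
    (h : E * (u : PowerSeries ℤ) = PowerSeries.X * PowerSeries.derivative ℤ (u : PowerSeries ℤ)) : doldL u = E := by
  rw [doldL, ← h, mul_assoc, Units.mul_inv, mul_one]

lemma doldL_mul_self (u : (PowerSeries ℤ)ˣ) :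
    doldL u * (u : PowerSeries ℤ) = PowerSeries.X * PowerSeries.derivative ℤ (u : PowerSeries ℤ) := by
  rw [doldL, mul_assoc, Units.inv_mul, mul_one]

lemma doldL_mul (u v : (PowerSeries ℤ)ˣ) : doldL (u * v) = doldL u + doldL v := by
  apply doldL_eq
  have h1 := doldL_mul_self u
  have h2 := doldL_mul_self v
  rw [Units.val_mul, Derivation.leibniz, smul_eq_mul, smul_eq_mul]
  linear_combination (v : PowerSeries ℤ) * h1 + (u : PowerSeries ℤ) * h2

lemma doldL_one : doldL 1 = 0 := by
  apply doldL_eq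
  simp

/-- units satisfying the congruence at `n` -/
noncomputable def doldH (n : ℕ) : Subgroup (PowerSeries ℤ)ˣ where
  carrier := {u | (n : ℤ) ∣ doldD n (doldL u)}
  mul_mem' := by
    intro a b ha hb
    simp only [Set.mem_ofPred_eq] at *
    rw [doldL_mul, doldD_add]
    exact dvd_add ha hb
  one_mem' := by
    simp [doldL_one, doldD]
  inv_mem' := by
    intro a ha
    simp only [Set.mem_ofPred_eq] at *
    have h : doldD n (doldL a) + doldD n (doldL a⁻¹) = 0 := by
      rw [← doldD_add, ← doldL_mul, mul_inv_cancel, doldL_one]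
      simp [doldD]
    rw [eq_neg_of_add_eq_zero_right h]
    exact (dvd_neg).2 ha

lemma doldL_one_sub (k : ℕ) (hk : 1 ≤ k) (v : (PowerSeries ℤ)ˣ)
    (hv : (v : PowerSeries ℤ) = 1 - PowerSeries.X ^ k) :
    doldL v = PowerSeries.mk fun d => if d ≠ 0 ∧ k ∣ d then -(k : ℤ) else 0 := by
  apply doldL_eq
  have : PowerSeries.X * PowerSeries.derivative ℤ (v : PowerSeries ℤ)
      = PowerSeries.C (-(k : ℤ)) * PowerSeries.X ^ k := by
    obtain ⟨j, rfl⟩ : ∃ j, k = j + 1 := ⟨k - 1, by omega⟩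
    rw [hv, map_sub, PowerSeries.derivative_pow]
    simp
    ring
  rw [this, hv]
  ext d
  rw [mul_sub, mul_one, map_sub, PowerSeries.coeff_mul_X_pow', PowerSeries.coeff_C_mul,
    PowerSeries.coeff_X_pow]
  simp only [PowerSeries.coeff_mk]
  rcases lt_trichotomy d k with h | h | h
  · have h1 : ¬ (d ≠ 0 ∧ k ∣ d) := fun ⟨h0, h1⟩ => by
      have := Nat.le_of_dvd (by omega) h1
      omega
    rw [if_neg h1, if_neg (by omega), if_neg (by omega)]
    simp
  · subst h
    simp
  · have h1 : k ∣ d - k ↔ k ∣ d := (Nat.dvd_sub_iff_left h.le dvd_rfl)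
    rw [if_pos h.le, if_neg h.ne']
    have h2 : d ≠ 0 := by omega
    have h3 : d - k ≠ 0 := by omega
    simp only [h1]
    by_cases hkd : k ∣ d
    · rw [if_pos ⟨h2, hkd⟩, if_pos ⟨h3, hkd⟩]; simp
    · rw [if_neg (fun h => hkd h.2), if_neg (fun h => hkd h.2)]; simp

lemma doldH_one_sub (n k : ℕ) (hn : 1 ≤ n) (hk : 1 ≤ k) (v : (PowerSeries ℤ)ˣ)
    (hv : (v : PowerSeries ℤ) = 1 - PowerSeries.X ^ k) : v ∈ doldH n := by
  change (n : ℤ) ∣ doldD n (doldL v)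
  rw [doldL_one_sub k hk v hv]
  have key := (ArithmeticFunction.sum_eq_iff_sum_mul_moebius_eq
    (f := fun d => if d = k then -(k : ℤ) else 0)
    (g := fun d => if d ≠ 0 ∧ k ∣ d then -(k : ℤ) else 0)).1 (by
      intro m hm
      rw [Finset.sum_ite_eq']
      have : m ≠ 0 := by omega
      simp [Nat.mem_divisors, this]) n hn
  rw [Nat.sum_divisorsAntidiagonal'
    (f := fun a b => Int.cast (R := ℤ) (ArithmeticFunction.moebius a) *
      (if b ≠ 0 ∧ k ∣ b then -(k : ℤ) else 0))] at key
  simp only [doldD, PowerSeries.coeff_mk]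
  simp only [Int.cast_id] at key
  rw [key]
  split_ifs with h
  · subst h; simp
  · simp

lemma doldH_top (n : ℕ) (hn : 1 ≤ n) (u : (PowerSeries ℤ)ˣ)
    (hu : PowerSeries.X ^ (n + 1) ∣ (u : PowerSeries ℤ) - 1) : u ∈ doldH n := by
  change (n : ℤ) ∣ doldD n (doldL u)
  obtain ⟨w, hw⟩ := hu
  have hw' : (u : PowerSeries ℤ) = 1 + PowerSeries.X ^ (n + 1) * w := by rw [← hw]; ring
  have h : PowerSeries.X ^ (n + 1) ∣ doldL u := by
    rw [doldL]
    apply Dvd.dvd.mul_right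
    rw [hw', map_add, Derivation.leibniz, PowerSeries.derivative_pow]
    simp only [smul_eq_mul, Derivation.map_one_eq_zero, zero_add,
      PowerSeries.derivative_X, Nat.add_sub_cancel, mul_one]
    exact ⟨PowerSeries.X * PowerSeries.derivative ℤ w + w * ((n + 1 : ℕ) : PowerSeries ℤ), by ring⟩
  rw [PowerSeries.X_pow_dvd_iff] at h
  rw [doldD, Finset.sum_eq_zero]
  · simp
  · intro d hd
    rw [h d (Nat.lt_succ_of_le (Nat.divisor_le hd)), mul_zero]

lemma doldH_step (n k : ℕ) (hn : 1 ≤ n) (hk : 1 ≤ k)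
    (ih : ∀ u : (PowerSeries ℤ)ˣ, PowerSeries.X ^ (k + 1) ∣ (u : PowerSeries ℤ) - 1 → u ∈ doldH n)
    (c : ℤ) : ∀ u : (PowerSeries ℤ)ˣ,
      PowerSeries.X ^ (k + 1) ∣ (u : PowerSeries ℤ) - (1 + (c : PowerSeries ℤ) * PowerSeries.X ^ k) →
      u ∈ doldH n := by
  obtain ⟨v, hv⟩ : IsUnit (1 - PowerSeries.X ^ k : PowerSeries ℤ) := by
    rw [PowerSeries.isUnit_iff_constantCoeff]
    have : k ≠ 0 := by omega
    simp [this]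
  have hvH := doldH_one_sub n k hn hk v hv
  obtain ⟨j, rfl⟩ : ∃ j, k = j + 1 := ⟨k - 1, by omega⟩
  induction c using Int.induction_on with
  | zero => simpa using ih
  | succ i hi =>
    intro u ⟨w, hw⟩
    rw [← Subgroup.mul_mem_cancel_right _ hvH]
    apply hi
    rw [Units.val_mul, hv]
    refine ⟨w * (1 - PowerSeries.X ^ (j + 1)) - ((i : PowerSeries ℤ) + 1) * PowerSeries.X ^ j, ?_⟩
    push_cast at hw ⊢
    linear_combination (1 - PowerSeries.X ^ (j + 1)) * hw
  | pred i hi =>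
    intro u ⟨w, hw⟩
    rw [← Subgroup.mul_mem_cancel_right _ (inv_mem hvH)]
    apply hi
    have h1 : (1 - PowerSeries.X ^ (j + 1)) * ((v⁻¹ : (PowerSeries ℤ)ˣ) : PowerSeries ℤ) = 1 := by
      rw [← hv, Units.mul_inv]
    rw [Units.val_mul]
    generalize ((v⁻¹ : (PowerSeries ℤ)ˣ) : PowerSeries ℤ) = t at *
    refine ⟨t * (w - (i : PowerSeries ℤ) * PowerSeries.X ^ j), ?_⟩
    push_cast at hw ⊢
    linear_combination t * hw + (1 - (i : PowerSeries ℤ) * PowerSeries.X ^ (j + 1)) * h1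

lemma doldH_all (n : ℕ) (hn : 1 ≤ n) (j : ℕ) : ∀ k, 1 ≤ k → k + j = n + 1 →
    ∀ u : (PowerSeries ℤ)ˣ, PowerSeries.X ^ k ∣ (u : PowerSeries ℤ) - 1 → u ∈ doldH n := by
  induction j with
  | zero =>
    intro k _ hk u hu
    obtain rfl : k = n + 1 := by omega
    exact doldH_top n hn u hu
  | succ j ih =>
    intro k hk hkj u ⟨w, hw⟩
    refine doldH_step n k hn hk (ih (k + 1) (by omega) (by omega))
      (PowerSeries.constantCoeff w) u ?_
    obtain ⟨y, hy⟩ := (PowerSeries.X_dvd_iff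
      (φ := w - ((PowerSeries.constantCoeff w : ℤ) : PowerSeries ℤ))).2 (by simp)
    refine ⟨y, ?_⟩
    linear_combination hw + PowerSeries.X ^ k * hy

lemma dold_leibniz_prod {A R ι : Type*} [CommRing A] [CommRing R] [Algebra A R] [DecidableEq ι]
    (D : Derivation A R R)
    (s : Finset ι) (f : ι → R) :
    D (∏ i ∈ s, f i) = ∑ i ∈ s, (∏ j ∈ s.erase i, f j) • D (f i) := by
  induction s using Finset.induction_on with
  | empty => simp
  | insert a s ha ih =>
    rw [Finset.prod_insert ha, Derivation.leibniz, ih, Finset.sum_insert ha,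
      Finset.erase_insert ha, Finset.smul_sum, add_comm]
    congr 1
    refine Finset.sum_congr rfl fun i hi => ?_
    have hia : a ≠ i := fun h => ha (h ▸ hi)
    rw [Finset.erase_insert_of_ne hia, Finset.prod_insert (by simp [ha]), smul_smul]

lemma jacobi_det {A R : Type*} [CommRing A] [CommRing R] [Algebra A R] {m : ℕ}
    (D : Derivation A R R)
    (M : Matrix (Fin m) (Fin m) R) : D M.det = (M.adjugate * M.map D).trace := by
  have h1 : ∀ i, (M.adjugate * M.map D) i i = (M.updateCol i (fun j => D (M j i))).det := by
    intro i
    rw [← Matrix.cramer_apply, Matrix.cramer_eq_adjugate_mulVec]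
    rfl
  simp only [Matrix.trace, Matrix.diag_apply, h1]
  simp only [Matrix.det_apply, map_sum]
  rw [Finset.sum_comm]
  refine Finset.sum_congr rfl fun σ _ => ?_
  rw [← Finset.smul_sum, Units.smul_def, Units.smul_def, map_zsmul, dold_leibniz_prod]
  congr 1
  refine Finset.sum_congr rfl fun i _ => ?_
  rw [← Finset.mul_prod_erase _ _ (Finset.mem_univ i), smul_eq_mul, mul_comm]
  congr 1
  · simp
  · refine Finset.prod_congr rfl fun j hj => ?_
    simp [Matrix.updateCol_ne (Finset.ne_of_mem_erase hj)]

lemma dold_trace_s12 (m : ℕ) (B : Matrix (Fin m) (Fin m) ℤ) :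
    ∃ u : (PowerSeries ℤ)ˣ, PowerSeries.X ∣ (u : PowerSeries ℤ) - 1 ∧
      ∀ d, 1 ≤ d → PowerSeries.coeff d (doldL u) = - (B ^ d).trace := by
  let B' : Matrix (Fin m) (Fin m) (PowerSeries ℤ) := B.map PowerSeries.C
  let M : Matrix (Fin m) (Fin m) (PowerSeries ℤ) := 1 - (PowerSeries.X : PowerSeries ℤ) • B'
  let S : Matrix (Fin m) (Fin m) (PowerSeries ℤ) :=
    Matrix.of fun i j => PowerSeries.mk fun n => (B ^ n) i j
  have hBS : S * B' = Matrix.of fun i j => PowerSeries.mk fun n => (B ^ (n + 1)) i j := by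
    ext i j d
    simp [S, B', Matrix.mul_apply, pow_succ, -eq_intCast, PowerSeries.coeff_mul_C]
  have hSM : S * M = 1 := by
    ext i j d
    simp only [M, mul_sub, mul_one, Matrix.mul_smul, hBS]
    rcases d with _ | d
    · simp [S, Matrix.one_apply]
    · simp [S, Matrix.one_apply, PowerSeries.coeff_succ_X_mul, apply_ite, PowerSeries.coeff_one]
  have hdet : S.det * M.det = 1 := by rw [← Matrix.det_mul, hSM, Matrix.det_one]
  have hadj : M.adjugate = M.det • S := by
    calc M.adjugate = (S * M) * M.adjugate := by rw [hSM, one_mul]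
      _ = _ := by rw [mul_assoc, Matrix.mul_adjugate, Matrix.mul_smul, mul_one]
  refine ⟨⟨M.det, S.det, by rw [mul_comm, hdet], hdet⟩, ?_, ?_⟩
  · rw [PowerSeries.X_dvd_iff, map_sub, RingHom.map_det]
    have : (PowerSeries.constantCoeff (R := ℤ)).mapMatrix M = 1 := by
      ext i j
      simp [M, Matrix.one_apply, apply_ite]
    simp [this]
  · intro d hd
    rw [doldL_eq _ (-(PowerSeries.X * (S * B').trace))]
    · obtain ⟨d, rfl⟩ : ∃ e, d = e + 1 := ⟨d - 1, by omega⟩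
      rw [map_neg, PowerSeries.coeff_succ_X_mul, hBS]
      simp [Matrix.trace]
    · have hD : M.map (PowerSeries.derivative ℤ) = - B' := by
        ext1 i j
        simp [M, B', Matrix.one_apply, apply_ite, Derivation.leibniz]
      rw [Units.val_mk, jacobi_det, hD, hadj]
      simp
      ring

/-- If `B` is a square matrix with integer entries, then `(trace (B ^ n))` is a Dold
sequence: for every `n ≥ 1`, `n` divides `∑_{d ∣ n} μ(n/d)·trace (B ^ d)`. -/
theorem trace_pow_int_matrix_dold (m : ℕ) (B : Matrix (Fin m) (Fin m) ℤ) :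
    ∀ n : ℕ, 1 ≤ n →
      (n : ℤ) ∣ ∑ d ∈ n.divisors, ArithmeticFunction.moebius (n / d) * (B ^ d).trace := by
  intro n hn
  obtain ⟨u, hu, h⟩ := dold_trace_s12 m B
  have hH : (n : ℤ) ∣ doldD n (doldL u) :=
    doldH_all n hn n 1 le_rfl (by omega) u (by simpa using hu)
  have e : doldD n (doldL u) =
      - ∑ d ∈ n.divisors, ArithmeticFunction.moebius (n / d) * (B ^ d).trace := by
    rw [doldD, ← Finset.sum_neg_distrib (fun d => ArithmeticFunction.moebius (n / d) * (B ^ d).trace)]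
    refine Finset.sum_congr rfl fun d hd => ?_
    rw [h d (Nat.pos_of_mem_divisors hd), mul_neg]
  rw [e] at hH
  exact (Int.dvd_neg).1 hH
end

section
/- Let A be a square matrix with integer entries. Then for every prime p and every integer r ≥ 1, trace(A^{p^r}) ≡ trace(A^{p^{r−1}}) modulo p^r. -/
open Polynomial in
lemma aux_derivative_det {n : Type*} [Fintype n] [DecidableEq n] {R : Type*} [CommRing R]
    (M : Matrix n n R[X]) :
    derivative M.det = (M.adjugate * M.map (fun q => derivative q)).trace := by
  have h1 : derivative M.det
      = ∑ i, (M.updateCol i (fun k => derivative (M k i))).det := by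
    simp only [Matrix.det_apply', derivative_sum]
    rw [Finset.sum_comm]
    refine Finset.sum_congr rfl fun σ _ => ?_
    rw [derivative_mul, derivative_intCast, zero_mul, zero_add, derivative_prod_finset,
      Finset.mul_sum]
    refine Finset.sum_congr rfl fun i _ => ?_
    rw [← Finset.prod_erase_mul _ _ (Finset.mem_univ i)]
    congr 1
    congr 1
    · refine Finset.prod_congr rfl fun j hj => ?_
      rw [Matrix.updateCol_ne (Finset.ne_of_mem_erase hj)]
    · simp
  rw [h1, Matrix.trace]
  refine Finset.sum_congr rfl fun i _ => ?_
  rw [← Matrix.cramer_apply, Matrix.cramer_eq_adjugate_mulVec]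
  simp [Matrix.mulVec, dotProduct, Matrix.mul_apply]

lemma aux_logderiv (m : ℕ) (A : Matrix (Fin m) (Fin m) ℤ) :
    PowerSeries.derivative ℤ (A.charpolyRev : PowerSeries ℤ) =
      - ((A.charpolyRev : PowerSeries ℤ) * PowerSeries.mk fun n => (A ^ (n + 1)).trace) := by
  let φ : Polynomial ℤ →+* PowerSeries ℤ := Polynomial.coeToPowerSeries.ringHom
  let M : Matrix (Fin m) (Fin m) (Polynomial ℤ) :=
    1 - (Polynomial.X : Polynomial ℤ) • A.map Polynomial.C
  let G : Matrix (Fin m) (Fin m) (PowerSeries ℤ) :=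
    Matrix.of fun i j => PowerSeries.mk fun n => (A ^ n) i j
  let A' : Matrix (Fin m) (Fin m) (PowerSeries ℤ) := A.map PowerSeries.C
  have hM : φ.mapMatrix M = 1 - (PowerSeries.X : PowerSeries ℤ) • A' := by
    ext1 i j
    by_cases hij : i = j <;> simp [M, φ, A', hij, -eq_intCast] <;> exact mul_comm _ _
  have hAG : ∀ i j n, PowerSeries.coeff n ((A' * G) i j) = (A ^ (n + 1)) i j := by
    intro i j n
    simp [A', G, Matrix.mul_apply, pow_succ', -eq_intCast]
  have hMG : φ.mapMatrix M * G = 1 := by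
    rw [hM, sub_mul, one_mul, smul_mul_assoc]
    ext i j n
    cases n with
    | zero =>
      by_cases hij : i = j <;> simp [G, Matrix.one_apply, hij]
    | succ n =>
      rw [Matrix.sub_apply, Matrix.smul_apply, map_sub, smul_eq_mul,
        PowerSeries.coeff_succ_X_mul, hAG]
      by_cases hij : i = j <;> simp [G, Matrix.one_apply, hij, PowerSeries.coeff_one]
  have hadj : φ.mapMatrix M.adjugate = φ M.det • G := by
    have h : φ.mapMatrix M.adjugate * φ.mapMatrix M = φ M.det • 1 := by
      rw [RingHom.map_adjugate, Matrix.adjugate_mul, RingHom.map_det]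
    calc φ.mapMatrix M.adjugate = φ.mapMatrix M.adjugate * (φ.mapMatrix M * G) := by
          rw [hMG, mul_one]
      _ = _ := by rw [← mul_assoc, h, smul_mul_assoc, one_mul]
  have hdM : M.map (fun q => Polynomial.derivative q) = - A.map Polynomial.C := by
    ext1 i j
    by_cases hij : i = j <;> simp [M, Matrix.one_apply, hij]
  have hA' : φ.mapMatrix (A.map Polynomial.C) = A' := by
    ext1 i j
    simp [φ, A', -eq_intCast]
  rw [PowerSeries.derivative_coe]
  have hf : A.charpolyRev = M.det := rfl
  rw [hf, aux_derivative_det, hdM]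
  change φ (Matrix.trace (M.adjugate * -A.map Polynomial.C)) = - (φ M.det * _)
  rw [mul_neg, Matrix.trace_neg, map_neg, AddMonoidHom.map_trace φ]
  change - (φ.mapMatrix _).trace = _
  rw [map_mul, hadj, hA', smul_mul_assoc, Matrix.trace_smul, smul_eq_mul, Matrix.trace_mul_comm]
  congr 2
  ext n
  simp [Matrix.trace, hAG]

lemma aux_congr (m : ℕ) (A : Matrix (Fin m) (Fin m) ℤ) (p : ℕ) (hp : p.Prime) :
    (p : Polynomial ℤ) ∣ (A ^ p).charpolyRev - A.charpolyRev := by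
  haveI := Fact.mk hp
  have hmap : ∀ B : Matrix (Fin m) (Fin m) ℤ,
      B.charpolyRev.map (Int.castRingHom (ZMod p)) =
        ((Int.castRingHom (ZMod p)).mapMatrix B).charpolyRev := by
    intro B
    rw [Matrix.charpolyRev, Matrix.charpolyRev, ← Polynomial.coe_mapRingHom, RingHom.map_det]
    congr 1
    ext1 i j
    by_cases hij : i = j <;> simp [Matrix.one_apply, hij]
  have h : (A ^ p).charpolyRev.map (Int.castRingHom (ZMod p)) =
      A.charpolyRev.map (Int.castRingHom (ZMod p)) := by
    rw [hmap, hmap, map_pow, ← Matrix.reverse_charpoly, ZMod.charpoly_pow_card,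
      Matrix.reverse_charpoly]
  have : (p : Polynomial ℤ) = Polynomial.C (p : ℤ) := by simp
  rw [this, Polynomial.C_dvd_iff_dvd_coeff]
  intro i
  rw [← ZMod.intCast_zmod_eq_zero_iff_dvd, Polynomial.coeff_sub]
  have := congrArg (fun q => Polynomial.coeff q i) h
  simp only [Polynomial.coeff_map, eq_intCast] at this
  rw [Int.cast_sub, this, sub_self]

lemma aux_final (f g a b : PowerSeries ℤ) (p k : ℕ) (hp : p ≠ 0)
    (hf : PowerSeries.constantCoeff f = 1)
    (ha : PowerSeries.derivative ℤ f = - (f * a)) (hb : PowerSeries.derivative ℤ g = - (g * b))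
    (h : (p : PowerSeries ℤ) ∣ g - f) :
    (p : ℤ) ^ (k + 1) ∣ PowerSeries.coeff (p ^ k - 1) b - PowerSeries.coeff (p ^ k - 1) a := by
  obtain ⟨w, hw⟩ := dvd_sub_pow_of_dvd_sub h k
  have hfu : IsUnit f := by
    rw [PowerSeries.isUnit_iff_constantCoeff, hf]; exact isUnit_one
  have hgu : IsUnit (f ^ p ^ k) := hfu.pow _
  obtain ⟨F, hF⟩ := hgu.exists_right_inv
  obtain ⟨v, hv⟩ : ∃ v, v = F * w := ⟨_, rfl⟩
  have hG : g ^ p ^ k = f ^ p ^ k * (1 + (p : PowerSeries ℤ) ^ (k + 1) * v) := by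
    rw [hv]; linear_combination hw - (p : PowerSeries ℤ) ^ (k + 1) * w * hF
  have hpow : ∀ (u c : PowerSeries ℤ), PowerSeries.derivative ℤ u = - (u * c) →
      PowerSeries.derivative ℤ (u ^ p ^ k) = - ((p : PowerSeries ℤ) ^ k * u ^ p ^ k * c) := by
    intro u c hu
    have h1 : p ^ k = p ^ k - 1 + 1 := by have := Nat.pos_of_ne_zero (pow_ne_zero k hp); omega
    rw [PowerSeries.derivative_pow, hu]
    have h2 : u ^ p ^ k = u ^ (p ^ k - 1) * u := by rw [← pow_succ, ← h1]
    rw [h2]; push_cast; ring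
  have hd := congrArg (PowerSeries.derivative ℤ) hG
  have hdp : PowerSeries.derivative ℤ ((p : PowerSeries ℤ) ^ (k + 1) * v)
      = (p : PowerSeries ℤ) ^ (k + 1) * PowerSeries.derivative ℤ v := by
    have : ((p : PowerSeries ℤ) ^ (k + 1)) = PowerSeries.C ((p : ℤ) ^ (k + 1)) := by simp
    rw [this, Derivation.leibniz, PowerSeries.derivative_C, smul_zero, add_zero, smul_eq_mul]
  rw [hpow g b hb, Derivation.leibniz, hpow f a ha, map_add, hdp, PowerSeries.derivative_one,
    hG] at hd
  simp only [smul_eq_mul, zero_add] at hd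
  have hp0 : (p : PowerSeries ℤ) ^ k ≠ 0 := pow_ne_zero _ (by
    intro h0
    have := congrArg PowerSeries.constantCoeff h0
    simp [hp] at this)
  have key : b - a = - ((p : PowerSeries ℤ) * PowerSeries.derivative ℤ v)
      - (p : PowerSeries ℤ) ^ (k + 1) * (v * (b - a)) := by
    apply mul_left_cancel₀ (mul_ne_zero hp0 hgu.ne_zero)
    linear_combination - hd
  have hc : ∀ (j : ℕ) (u : PowerSeries ℤ) (n : ℕ),
      PowerSeries.coeff n ((p : PowerSeries ℤ) ^ j * u) = (p : ℤ) ^ j * PowerSeries.coeff n u := by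
    intro j u n
    have : ((p : PowerSeries ℤ) ^ j) = PowerSeries.C ((p : ℤ) ^ j) := by simp
    rw [this, PowerSeries.coeff_C_mul]
  have hk := congrArg (PowerSeries.coeff (p ^ k - 1)) key
  rw [map_sub, map_sub, hc, map_neg] at hk
  have hc1 := hc 1 (PowerSeries.derivative ℤ v) (p ^ k - 1)
  rw [pow_one, pow_one, PowerSeries.coeff_derivative] at hc1
  have h1 : (((p ^ k - 1 : ℕ) : ℤ) + 1) = (p : ℤ) ^ k := by
    have := Nat.pos_of_ne_zero (pow_ne_zero k hp)
    have h2 : p ^ k - 1 + 1 = p ^ k := by omega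
    exact_mod_cast h2
  rw [h1] at hc1
  rw [hk, hc1]
  refine dvd_sub ?_ (dvd_mul_right _ _)
  rw [dvd_neg]
  exact ⟨PowerSeries.coeff (p ^ k - 1 + 1) v, by ring⟩


/-- Euler–Fermat congruence for integer matrices: for any square integer matrix `A`,
prime `p` and `r ≥ 1`, `trace (A ^ (p ^ r)) ≡ trace (A ^ (p ^ (r − 1)))` modulo `p ^ r`. -/
theorem trace_pow_prime_pow_congruence (m : ℕ) (A : Matrix (Fin m) (Fin m) ℤ)
    (p : ℕ) (hp : p.Prime) (r : ℕ) (hr : 1 ≤ r) :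
    ((p : ℤ) ^ r) ∣ (A ^ (p ^ r)).trace - (A ^ (p ^ (r - 1))).trace := by
  obtain ⟨k, rfl⟩ : ∃ k, r = k + 1 := ⟨r - 1, by omega⟩
  have h0 : PowerSeries.constantCoeff (A.charpolyRev : PowerSeries ℤ) = 1 := by
    rw [← PowerSeries.coeff_zero_eq_constantCoeff_apply, Polynomial.coeff_coe,
      Polynomial.coeff_zero_eq_eval_zero, Matrix.eval_charpolyRev]
  have hd : (p : PowerSeries ℤ) ∣
      ((A ^ p).charpolyRev : PowerSeries ℤ) - (A.charpolyRev : PowerSeries ℤ) := by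
    have := map_dvd (Polynomial.coeToPowerSeries.ringHom (R := ℤ)) (aux_congr m A p hp)
    simpa using this
  have := aux_final _ _ _ _ p k hp.ne_zero h0 (aux_logderiv m A) (aux_logderiv m (A ^ p)) hd
  have h2 : p ^ k - 1 + 1 = p ^ k := by
    have := Nat.pos_of_ne_zero (pow_ne_zero k hp.ne_zero)
    omega
  rw [PowerSeries.coeff_mk, PowerSeries.coeff_mk, h2, ← pow_mul, ← pow_succ'] at this
  simpa using this
end
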